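/- arXiv:1706.01618 — 2 statements merged into one kernel-verified Lean document; each statement's English description precedes it below -/
import Mathlib

section
/- Let p be an odd prime, let d be a positive integer with d > (p−1)/2, and let ρ be a metric on ℝᵈ inducing the standard (Euclidean) topology of ℝᵈ. Then there exist p distinct points x₀, x₁, …, x_{p−1} in ℝᵈ, indexed by 𝔽_p, such that for every t ∈ {1, 2, …, (p−1)/2} the p-gon C_t is ρ-equilateral. -/
/-- `ρ` is a metric on `E` that induces the (given) standard topology of `E`. -/
def IsMetricEquivToStd {E : Type*} [TopologicalSpace E] (ρ : E → E → ℝ) : Prop :=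
  (∀ x y, ρ x y = ρ y x) ∧
  (∀ x y, ρ x y = 0 ↔ x = y) ∧
  (∀ x y z, ρ x z ≤ ρ x y + ρ y z) ∧
  (∀ s : Set E, IsOpen s ↔ ∀ x ∈ s, ∃ ε > 0, {y | ρ x y < ε} ⊆ s)

namespace CyclicChains

open Finset

section Cochains

variable {p : ℕ} {α β : Type*}

/-- Chains on ordered tuples (lists) of points, with coefficients in `ZMod p`, in all degrees
at once; the empty list plays the role of the augmentation. -/
abbrev Chain (p : ℕ) (α : Type*) := List α →₀ ZMod p

/-- Cochains on ordered tuples. -/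
abbrev Cochain (p : ℕ) (α : Type*) := List α → ZMod p

/-- The cone with apex `a` over a chain. -/
noncomputable def cone (a : α) : Chain p α →ₗ[ZMod p] Chain p α :=
  Finsupp.lmapDomain _ _ (List.cons a)

/-- The simplicial boundary of a single tuple. -/
noncomputable def bdList : List α → Chain p α
  | [] => 0
  | a :: l => Finsupp.single l 1 - cone a (bdList l)

/-- The simplicial boundary. -/
noncomputable def bd : Chain p α →ₗ[ZMod p] Chain p α :=
  Finsupp.linearCombination _ bdList

/-- The chain map induced by a map of points. -/
noncomputable def push (f : α → β) : Chain p α →ₗ[ZMod p] Chain p β :=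
  Finsupp.lmapDomain _ _ (List.map f)

/-- The simplicial coboundary of `f`, evaluated on a tuple. -/
def cobdList : List α → Cochain p α → ZMod p
  | [], _ => 0
  | a :: l, f => f l - cobdList l (fun l' => f (a :: l'))

/-- Evaluation of a cochain on a chain. -/
noncomputable def pair (f : Cochain p α) : Chain p α →ₗ[ZMod p] ZMod p :=
  Finsupp.linearCombination _ f

@[simp] lemma cone_single (a : α) (l : List α) (r : ZMod p) :
    cone a (Finsupp.single l r) = Finsupp.single (a :: l) r := by
  simp [cone]

@[simp] lemma push_single (f : α → β) (l : List α) (r : ZMod p) :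
    push f (Finsupp.single l r) = Finsupp.single (l.map f) r := by
  simp [push]

@[simp] lemma pair_single (f : Cochain p α) (l : List α) (r : ZMod p) :
    pair f (Finsupp.single l r) = r * f l := by
  simp [pair]

@[simp] lemma bd_single (l : List α) (r : ZMod p) :
    bd (Finsupp.single l r) = r • bdList l := by
  simp [bd]

lemma bd_cone (a : α) (c : Chain p α) : bd (cone a c) = c - cone a (bd c) := by
  induction c using Finsupp.induction_linear with
  | zero => simp
  | add f g hf hg => simp only [map_add, hf, hg]; abel
  | single l r => simp [bdList, smul_sub]

lemma bd_bdList (l : List α) : bd (bdList l : Chain p α) = 0 := by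
  induction l with
  | nil => simp [bdList]
  | cons a l ih => simp [bdList, bd_cone, ih]

lemma push_cone (f : α → β) (a : α) (c : Chain p α) :
    push f (cone a c) = cone (f a) (push f c) := by
  induction c using Finsupp.induction_linear with
  | zero => simp
  | add f g hf hg => simp only [map_add, hf, hg]
  | single l r => simp

lemma push_bdList (f : α → β) (l : List α) :
    push f (bdList l : Chain p α) = bdList (l.map f) := by
  induction l with
  | nil => simp [bdList]
  | cons a l ih => simp [bdList, push_cone, ih]

lemma push_bd (f : α → β) (c : Chain p α) : push f (bd c) = bd (push f c) := by
  induction c using Finsupp.induction_linear with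
  | zero => simp
  | add f g hf hg => simp only [map_add, hf, hg]
  | single l r => simp [push_bdList]

lemma pair_cone (f : Cochain p α) (a : α) (c : Chain p α) :
    pair f (cone a c) = pair (fun l => f (a :: l)) c := by
  induction c using Finsupp.induction_linear with
  | zero => simp
  | add f g hf hg => simp only [map_add, hf, hg]
  | single l r => simp

lemma pair_push (f : Cochain p β) (φ : α → β) (c : Chain p α) :
    pair f (push φ c) = pair (fun l => f (l.map φ)) c := by
  induction c using Finsupp.induction_linear with
  | zero => simp
  | add f g hf hg => simp only [map_add, hf, hg]
  | single l r => simp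

lemma pair_bdList (f : Cochain p α) (l : List α) : pair f (bdList l) = cobdList l f := by
  induction l generalizing f with
  | nil => simp [bdList, cobdList]
  | cons a l ih => simp [bdList, cobdList, pair_cone, ih]

lemma pair_bd (f : Cochain p α) (c : Chain p α) :
    pair f (bd c) = pair (fun l => cobdList l f) c := by
  induction c using Finsupp.induction_linear with
  | zero => simp
  | add f g hf hg => simp only [map_add, hf, hg]
  | single l r => simp [pair_bdList]

lemma pair_congr {f g : Cochain p α} {c : Chain p α} (h : ∀ l ∈ c.support, f l = g l) :
    pair f c = pair g c := by
  simp only [pair, Finsupp.linearCombination_apply, Finsupp.sum]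
  exact sum_congr rfl fun l hl => by rw [h l hl]

lemma pair_sum {ι : Type*} (s : Finset ι) (f : ι → Cochain p α) (c : Chain p α) :
    pair (∑ i ∈ s, f i) c = ∑ i ∈ s, pair (f i) c := by
  simp only [pair, Finsupp.linearCombination_apply, Finsupp.sum, Finset.sum_apply, smul_eq_mul,
    mul_sum]
  exact sum_comm

lemma pair_sub (f g : Cochain p α) (c : Chain p α) :
    pair (f - g) c = pair f c - pair g c := by
  simp only [pair, Finsupp.linearCombination_apply, Finsupp.sum, Pi.sub_apply, smul_eq_mul,
    mul_sub, sum_sub_distrib]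

lemma cobdList_eq_pair (l : List α) (f : Cochain p α) :
    cobdList l f = pair f (bdList l) := (pair_bdList f l).symm

lemma cobdList_cobdList (l : List α) (f : Cochain p α) :
    cobdList l (fun l' => cobdList l' f) = 0 := by
  rw [← pair_bdList, ← pair_bd, bd_bdList, map_zero]

lemma cobdList_congr {l : List α} {f g : Cochain p α}
    (h : ∀ l', l'.Sublist l → l'.length + 1 = l.length → f l' = g l') :
    cobdList l f = cobdList l g := by
  induction l generalizing f g with
  | nil => rfl
  | cons a l ih =>
    simp only [cobdList]
    rw [h l (List.sublist_cons_self a l) rfl, ih]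
    intro l' hl' hlen
    exact h _ (hl'.cons_cons a) (by simpa using hlen)

/-- A cochain that changes sign under adjacent transpositions. -/
def Alternates (f : Cochain p α) : Prop :=
  ∀ l₁ a b l₂, f (l₁ ++ a :: b :: l₂) = - f (l₁ ++ b :: a :: l₂)

lemma cobdList_neg (l : List α) (f : Cochain p α) : cobdList l (-f) = - cobdList l f := by
  induction l generalizing f with
  | nil => simp [cobdList]
  | cons a l ih =>
    have := ih (fun l' => f (a :: l'))
    simp only [cobdList, Pi.neg_apply] at *
    rw [show (fun l' => - f (a :: l')) = - (fun l' => f (a :: l')) from rfl, this]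
    ring

lemma Alternates.cobdList {f : Cochain p α} (hf : Alternates f) :
    Alternates (fun l => cobdList l f) := by
  intro l₁
  induction l₁ generalizing f with
  | nil =>
    intro a b l₂
    have h := hf []
    simp only [List.nil_append] at h
    simp only [List.nil_append, CyclicChains.cobdList]
    rw [show (fun l' => f (a :: b :: l')) = - (fun l' => f (b :: a :: l')) from
      funext fun l' => h a b l', cobdList_neg]
    ring
  | cons c l₁ ih =>
    intro a b l₂
    have hc : Alternates (fun l' => f (c :: l')) := fun l₁ a b l₂ => hf (c :: l₁) a b l₂
    have := ih hc a b l₂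
    simp only [List.cons_append, CyclicChains.cobdList] at this ⊢
    rw [this, hf l₁ a b l₂]
    ring

lemma Alternates.apply_eq_zero_of_repeat [Fact p.Prime] (hp : p ≠ 2) {f : Cochain p α}
    (hf : Alternates f) (a : α) (l₁ l₂ l₃ : List α) :
    f (l₁ ++ a :: (l₂ ++ a :: l₃)) = 0 := by
  induction l₂ generalizing l₁ with
  | nil =>
    have h := hf l₁ a a l₃
    have : Fact (2 < p) := ⟨lt_of_le_of_ne (Fact.out : p.Prime).two_le hp.symm⟩
    exact (ZMod.neg_eq_self_iff _).1 h.symm |>.resolve_right fun h2 => by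
      have : Odd p := (Fact.out : p.Prime).odd_of_ne_two hp
      obtain ⟨k, hk⟩ := this
      omega
  | cons b l₂ ih =>
    have := ih (l₁ ++ [b])
    simp only [List.append_assoc, List.cons_append, List.nil_append] at this
    rw [List.cons_append, hf, this, neg_zero]

lemma Alternates.apply_eq_zero_of_not_nodup [Fact p.Prime] (hp : p ≠ 2) {f : Cochain p α}
    (hf : Alternates f) {l : List α} (hl : ¬ l.Nodup) : f l = 0 := by
  induction l generalizing f with
  | nil => simp at hl
  | cons a l ih =>
    by_cases ha : a ∈ l
    · obtain ⟨s, t, rfl⟩ := List.append_of_mem ha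
      exact hf.apply_eq_zero_of_repeat hp a [] s t
    · exact ih (f := fun l' => f (a :: l')) (fun l₁ a' b l₂ => hf (a :: l₁) a' b l₂)
        (by simpa [ha] using hl)

/-- A family of maps forming an action of `ZMod p`. -/
structure IsShift (φ : ZMod p → α → α) : Prop where
  zero : ∀ a, φ 0 a = a
  add : ∀ g h a, φ (g + h) a = φ g (φ h a)

lemma IsShift.map_map {φ : ZMod p → α → α} (hφ : IsShift φ) (g h : ZMod p) (l : List α) :
    (l.map (φ h)).map (φ g) = l.map (φ (g + h)) := by
  simp [hφ.add]

lemma IsShift.map_zero {φ : ZMod p → α → α} (hφ : IsShift φ) (l : List α) :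
    l.map (φ 0) = l := by
  rw [show φ 0 = id from funext hφ.zero, List.map_id]

/-- The induced action on cochains. -/
def act (φ : ZMod p → α → α) (g : ZMod p) : Cochain p α →ₗ[ZMod p] Cochain p α :=
  LinearMap.funLeft _ _ (List.map (φ g))

@[simp] lemma act_apply (φ : ZMod p → α → α) (g : ZMod p) (f : Cochain p α) (l : List α) :
    act φ g f l = f (l.map (φ g)) := rfl

lemma act_act {φ : ZMod p → α → α} (hφ : IsShift φ) (g h : ZMod p) (f : Cochain p α) :
    act φ g (act φ h f) = act φ (g + h) f := by
  ext l
  simp only [act_apply, hφ.map_map, add_comm]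

/-- The norm of the action on cochains. -/
def actNorm [NeZero p] (φ : ZMod p → α → α) : Cochain p α →ₗ[ZMod p] Cochain p α :=
  ∑ g, act φ g

/-- The sum of the translates of a cochain, each weighted by the translating element. -/
def actWeighted [NeZero p] (φ : ZMod p → α → α) : Cochain p α →ₗ[ZMod p] Cochain p α :=
  ∑ g, g • act φ g

lemma actNorm_apply [NeZero p] (φ : ZMod p → α → α) (f : Cochain p α) (l : List α) :
    actNorm φ f l = ∑ g, f (l.map (φ g)) := by
  simp [actNorm]

lemma act_actWeighted [NeZero p] {φ : ZMod p → α → α} (hφ : IsShift φ) (f : Cochain p α) :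
    act φ 1 (actWeighted φ f) = actWeighted φ f - actNorm φ f := by
  simp only [actNorm, actWeighted, LinearMap.sum_apply, LinearMap.smul_apply, map_sum, map_smul,
    act_act hφ, ← sum_sub_distrib]
  refine Fintype.sum_equiv (Equiv.addLeft (1 : ZMod p)) _ _ fun g => ?_
  simp only [Equiv.coe_addLeft, add_smul, one_smul]
  abel

lemma actWeighted_act [NeZero p] {φ : ZMod p → α → α} (hφ : IsShift φ) (f : Cochain p α) :
    actWeighted φ (act φ 1 f) = actWeighted φ f - actNorm φ f := by
  simp only [actNorm, actWeighted, LinearMap.sum_apply, LinearMap.smul_apply,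
    act_act hφ, ← sum_sub_distrib]
  refine Fintype.sum_equiv (Equiv.addRight (1 : ZMod p)) _ _ fun g => ?_
  simp only [Equiv.coe_addRight, add_smul, one_smul]
  abel

lemma Alternates.act {φ : ZMod p → α → α} {f : Cochain p α} (hf : Alternates f) (g : ZMod p) :
    Alternates (act φ g f) := fun l₁ a b l₂ => by
  simpa using hf (l₁.map (φ g)) (φ g a) (φ g b) (l₂.map (φ g))

lemma Alternates.actNorm [NeZero p] {φ : ZMod p → α → α} {f : Cochain p α}
    (hf : Alternates f) : Alternates (actNorm φ f) := fun l₁ a b l₂ => by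
  rw [actNorm_apply, actNorm_apply, ← sum_neg_distrib]
  exact sum_congr rfl fun g _ => hf.act g l₁ a b l₂

/-- The coboundary, set to zero on the tuples that do not satisfy `good`. -/
noncomputable def cobdOn (good : List α → Prop) : Cochain p α →ₗ[ZMod p] Cochain p α := by
  classical
  exact
  { toFun := fun f l => if good l then cobdList l f else 0
    map_add' := fun f g => by
      ext l
      simp only [cobdList_eq_pair, pair, Finsupp.linearCombination_apply, Finsupp.sum,
        Pi.add_apply, smul_add, sum_add_distrib]
      split_ifs <;> simp
    map_smul' := fun r f => by
      ext l
      simp only [cobdList_eq_pair, pair, Finsupp.linearCombination_apply, Finsupp.sum,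
        Pi.smul_apply, smul_eq_mul, RingHom.id_apply, mul_left_comm _ r, ← mul_sum]
      split_ifs <;> simp }

lemma cobdOn_of_good {good : List α → Prop} {l : List α} (hl : good l) (f : Cochain p α) :
    cobdOn good f l = cobdList l f := if_pos hl

lemma cobdOn_of_not_good {good : List α → Prop} {l : List α} (hl : ¬ good l)
    (f : Cochain p α) : cobdOn good f l = 0 := if_neg hl

/-- A family of nonempty tuples, closed under nonempty subtuples, permutations and the action
`φ`, together with an equivariant map `s` to `ZMod p` insensitive to permutations. -/
structure IsFreeComplex (φ : ZMod p → α → α) (good : List α → Prop) (s : List α → ZMod p) :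
    Prop where
  isShift : IsShift φ
  not_nil : ¬ good []
  sublist : ∀ {l l'}, good l → l'.Sublist l → l' ≠ [] → good l'
  perm : ∀ {l l'}, l.Perm l' → (good l ↔ good l')
  map : ∀ g l, good (l.map (φ g)) ↔ good l
  label_perm : ∀ {l l'}, l.Perm l' → s l = s l'
  label_map : ∀ g l, good l → s (l.map (φ g)) = s l + g

lemma perm_swap (l₁ : List α) (a b : α) (l₂ : List α) :
    (l₁ ++ a :: b :: l₂).Perm (l₁ ++ b :: a :: l₂) :=
  (List.Perm.swap b a l₂).append_left l₁

namespace IsFreeComplex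

variable {φ : ZMod p → α → α} {good : List α → Prop} {s : List α → ZMod p}

lemma cobdOn_cobdOn (h : IsFreeComplex φ good s) (f : Cochain p α) :
    cobdOn good (cobdOn good f) = 0 := by
  ext l
  by_cases hl : good l
  · rw [cobdOn_of_good hl]
    match l, hl with
    | [], hl => exact absurd hl h.not_nil
    | [a], hl => simp [cobdList, cobdOn_of_not_good h.not_nil]
    | a :: b :: l, hl =>
      rw [Pi.zero_apply, ← cobdList_cobdList (a :: b :: l) f]
      refine cobdList_congr fun l' hl' hlen => cobdOn_of_good (h.sublist hl hl' ?_) f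
      rintro rfl
      simp at hlen
  · rw [cobdOn_of_not_good hl]; rfl

lemma cobdOn_act (h : IsFreeComplex φ good s) (g : ZMod p) (f : Cochain p α) :
    cobdOn good (act φ g f) = act φ g (cobdOn good f) := by
  ext l
  rw [act_apply]
  by_cases hl : good l
  · rw [cobdOn_of_good hl, cobdOn_of_good ((h.map g l).2 hl), cobdList_eq_pair,
      cobdList_eq_pair, ← push_bdList, pair_push]
    rfl
  · rw [cobdOn_of_not_good hl, cobdOn_of_not_good (mt (h.map g l).1 hl)]

lemma cobdOn_actNorm [NeZero p] (h : IsFreeComplex φ good s) (f : Cochain p α) :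
    cobdOn good (actNorm φ f) = actNorm φ (cobdOn good f) := by
  simp only [actNorm, LinearMap.sum_apply, map_sum, h.cobdOn_act]

lemma cobdOn_actWeighted [NeZero p] (h : IsFreeComplex φ good s) (f : Cochain p α) :
    cobdOn good (actWeighted φ f) = actWeighted φ (cobdOn good f) := by
  simp only [actWeighted, LinearMap.sum_apply, LinearMap.smul_apply, map_sum, map_smul,
    h.cobdOn_act]

lemma alternates_cobdOn (h : IsFreeComplex φ good s) {f : Cochain p α} (hf : Alternates f) :
    Alternates (cobdOn good f) := by
  intro l₁ a b l₂
  by_cases hl : good (l₁ ++ a :: b :: l₂)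
  · rw [cobdOn_of_good hl, cobdOn_of_good ((h.perm (perm_swap l₁ a b l₂)).1 hl)]
    exact hf.cobdList l₁ a b l₂
  · rw [cobdOn_of_not_good hl, cobdOn_of_not_good (mt (h.perm (perm_swap l₁ a b l₂)).2 hl),
      neg_zero]

/-- An invariant cochain is a norm. -/
lemma exists_actNorm_eq [NeZero p] (h : IsFreeComplex φ good s) {f : Cochain p α}
    (hf : Alternates f) (hgood : ∀ l, ¬ good l → f l = 0) (hinv : act φ 1 f = f) :
    ∃ v : Cochain p α, Alternates v ∧ actNorm φ v = f := by
  have hinv' : ∀ g : ZMod p, act φ g f = f := by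
    intro g
    rw [← ZMod.natCast_zmod_val g]
    induction g.val with
    | zero => ext l; rw [act_apply, Nat.cast_zero, h.isShift.map_zero]
    | succ n ih => rw [Nat.cast_succ, ← act_act h.isShift, hinv, ih]
  refine ⟨fun l => if s l = 0 then f l else 0, fun l₁ a b l₂ => ?_, ?_⟩
  · simp only [h.label_perm (perm_swap l₁ a b l₂), hf l₁ a b l₂]
    split_ifs <;> simp
  · ext l
    rw [actNorm_apply]
    by_cases hl : good l
    · simp only [h.label_map _ l hl, add_eq_zero_iff_neg_eq, sum_ite_eq, mem_univ, if_true]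
      exact congrFun (hinv' _) l
    · rw [hgood l hl]
      refine sum_eq_zero fun g _ => ?_
      rw [hgood _ (mt (h.map g l).1 hl), ite_self]

lemma sum_zmod_eq_sum_range [NeZero p] (F : ZMod p → ZMod p) :
    ∑ g, F g = ∑ k ∈ range p, F (-(k : ZMod p)) := by
  rw [← Fintype.sum_equiv (Equiv.neg (ZMod p)) (fun g => F (-g)) F fun g => rfl]
  symm
  refine sum_bij (fun k _ => (k : ZMod p)) (fun _ _ => mem_univ _) ?_ ?_ fun _ _ => rfl
  · intro a ha b hb hab
    simpa [ZMod.natCast_eq_natCast_iff', Nat.mod_eq_of_lt (mem_range.1 ha),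
      Nat.mod_eq_of_lt (mem_range.1 hb)] using hab
  · exact fun g _ => ⟨g.val, mem_range.2 g.val_lt, ZMod.natCast_zmod_val g⟩

/-- A cochain of norm zero is a difference. -/
lemma exists_act_sub_eq [Fact p.Prime] (h : IsFreeComplex φ good s) {f : Cochain p α}
    (hf : Alternates f) (hgood : ∀ l, ¬ good l → f l = 0) (hnorm : actNorm φ f = 0) :
    ∃ v : Cochain p α, Alternates v ∧ act φ 1 v - v = f := by
  classical
  refine ⟨fun l => if good l then
    ∑ k ∈ range (s l).val, f (l.map (φ (-((k : ZMod p) + 1)))) else 0, fun l₁ a b l₂ => ?_, ?_⟩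
  · simp only [h.label_perm (perm_swap l₁ a b l₂), h.perm (perm_swap l₁ a b l₂)]
    split_ifs
    · rw [← sum_neg_distrib]
      exact sum_congr rfl fun k _ => hf.act _ l₁ a b l₂
    · simp
  · ext l
    simp only [Pi.sub_apply, act_apply, h.map]
    by_cases hl : good l
    · simp only [hl, if_true, h.label_map 1 l hl, h.isShift.map_map, neg_add_rev,
        neg_add_cancel_comm]
      have key : ∀ n : ℕ, ∑ k ∈ range (n + 1), f (l.map (φ (-(k : ZMod p)))) =
          (∑ k ∈ range n, f (l.map (φ (-1 + -(k : ZMod p))))) + f l := by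
        intro n
        rw [sum_range_succ']
        simp [h.isShift.map_zero, neg_add_rev]
      rcases Nat.lt_or_ge ((s l).val + 1) p with hlt | hge
      · have : Fact (1 < p) := ⟨(Fact.out : p.Prime).one_lt⟩
        rw [ZMod.val_add_of_lt (by rwa [ZMod.val_one]), ZMod.val_one, key]
        ring
      · have hv : (s l).val + 1 = p := le_antisymm (s l).val_lt hge
        have hs : s l + 1 = 0 := by
          have := congrArg (Nat.cast : ℕ → ZMod p) hv
          simpa using this
        have h0 := congrFun hnorm l
        rw [actNorm_apply, sum_zmod_eq_sum_range, show range p = range ((s l).val + 1) by rw [hv],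
          key, Pi.zero_apply] at h0
        rw [hs, ZMod.val_zero, range_zero, sum_empty]
        linear_combination -h0
    · simp [hl, hgood l hl]

end IsFreeComplex

/-- The norm of the action on chains. -/
noncomputable def pushNorm [NeZero p] (φ : ZMod p → α → α) (c : Chain p α) : Chain p α :=
  ∑ g, push (φ g) c

lemma pair_pushNorm [NeZero p] (φ : ZMod p → α → α) (f : Cochain p α) (c : Chain p α) :
    pair f (pushNorm φ c) = pair (actNorm φ f) c := by
  simp only [pushNorm, map_sum, pair_push, actNorm, LinearMap.sum_apply, pair_sum]
  rfl

lemma pair_push_sub (φ : ZMod p → α → α) (f : Cochain p α) (c : Chain p α) :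
    pair f (push (φ 1) c - c) = pair (act φ 1 f - f) c := by
  rw [map_sub, pair_push, pair_sub]
  rfl

/-- A sequence of chains with alternating boundary relations `∂h = (T - 1)h'`, `∂h = N h'` up to
degree `2 * J`. -/
structure IsResolving [NeZero p] (φ : ZMod p → α → α) (J : ℕ) (h : ℕ → Chain p α) : Prop where
  start : ∃ a, h 0 = Finsupp.single [a] 1
  odd : ∀ j < J, bd (h (2 * j + 1)) = push (φ 1) (h (2 * j)) - h (2 * j)
  even : ∀ j < J, bd (h (2 * j + 2)) = pushNorm φ (h (2 * j + 1))

/-- An algebraic form of Dold's theorem: a resolving sequence cannot be carried by a free complex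
whose dimension is too small. -/
theorem IsFreeComplex.exists_nodup_of_isResolving [Fact p.Prime] (hp : p ≠ 2)
    {φ : ZMod p → α → α} {good : List α → Prop} {s : List α → ZMod p}
    (hc : IsFreeComplex φ good s) {J : ℕ} {h : ℕ → Chain p α} (hh : IsResolving φ J h)
    (hgood : ∀ i ≤ 2 * J, ∀ l ∈ (h i).support, good l) :
    ∃ l ∈ (h (2 * J)).support, l.Nodup := by
  classical
  have pair_bd_eq : ∀ (f : Cochain p α), ∀ i ≤ 2 * J,
      pair f (bd (h i)) = pair (cobdOn good f) (h i) := by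
    intro f i hi
    rw [pair_bd]
    exact pair_congr fun l hl => (cobdOn_of_good (hgood i hi l hl) f).symm
  have key : ∀ j ≤ J, ∃ v : Cochain p α, Alternates v ∧ cobdOn good (actNorm φ v) = 0 ∧
      pair (actNorm φ v) (h (2 * j)) = 1 := by
    intro j
    induction j with
    | zero =>
      intro _
      obtain ⟨a, ha⟩ := hh.start
      have hga : good [a] := hgood 0 (Nat.zero_le _) [a] (by
        rw [ha, Finsupp.mem_support_iff]; simp)
      obtain ⟨v, hv, hvn⟩ := hc.exists_actNorm_eq
        (f := fun l => if good l ∧ l.length = 1 then 1 else 0)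
        (fun l₁ a b l₂ => by simp [← add_assoc])
        (fun l hl => by simp [hl]) (by ext l; simp [hc.map])
      refine ⟨v, hv, ?_, by simp [hvn, ha, hga]⟩
      rw [hvn]
      ext l
      by_cases hl : good l
      · rw [cobdOn_of_good hl]
        match l, hl with
        | [], hl => exact absurd hl hc.not_nil
        | [a], hl => simp [cobdList]
        | [a, b], hl =>
          have h1 : good [a] := hc.sublist hl (by simp) (by simp)
          have h2 : good [b] := hc.sublist hl (by simp) (by simp)
          simp [cobdList, h1, h2]
        | a :: b :: c :: l, hl =>
          simp only [Pi.zero_apply]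
          rw [cobdList_congr (g := -0), cobdList_neg]
          · simp [cobdList_eq_pair, pair]
          · intro l' _ hlen
            simp only [List.length_cons] at hlen
            simp only [Pi.neg_apply, Pi.zero_apply, neg_zero, ite_eq_right_iff]
            omega
      · rw [cobdOn_of_not_good hl]; rfl
    | succ j ih =>
      intro hj
      obtain ⟨v, hv, hv0, hv1⟩ := ih (by omega)
      obtain ⟨y, hy, hyv⟩ := hc.exists_act_sub_eq (hc.alternates_cobdOn hv)
        (fun l hl => cobdOn_of_not_good hl v) (by rw [← hc.cobdOn_actNorm, hv0])
      obtain ⟨w, hw, hwy⟩ := hc.exists_actNorm_eq (hc.alternates_cobdOn hy)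
        (fun l hl => cobdOn_of_not_good hl y) (by
          rw [← sub_eq_zero, ← hc.cobdOn_act, ← map_sub, hyv, hc.cobdOn_cobdOn])
      refine ⟨w, hw, by rw [hwy, hc.cobdOn_cobdOn], ?_⟩
      have e1 : actNorm φ y = - cobdOn good (actWeighted φ v) := by
        rw [hc.cobdOn_actWeighted, ← hyv, map_sub, actWeighted_act hc.isShift]
        abel
      have e2 : act φ 1 (actWeighted φ v) - actWeighted φ v = - actNorm φ v := by
        rw [act_actWeighted hc.isShift]
        abel
      have pair_neg : ∀ (f : Cochain p α) c, pair (-f) c = - pair f c := fun f c => by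
        rw [← zero_sub, pair_sub]
        simp [pair]
      rw [hwy, show 2 * (j + 1) = 2 * j + 2 by ring, ← pair_bd_eq y _ (by omega), hh.even j hj,
        pair_pushNorm, e1, pair_neg, ← pair_bd_eq _ _ (by omega), hh.odd j hj, pair_push_sub, e2,
        pair_neg, neg_neg, hv1]
  obtain ⟨v, hv, -, hv1⟩ := key J le_rfl
  by_contra! hno
  rw [pair_congr (g := 0) fun l hl => hv.actNorm.apply_eq_zero_of_not_nodup hp (hno l hl)] at hv1
  simp [pair] at hv1

end Cochains

section Supported

variable {p : ℕ} {α β : Type*}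

lemma cone_mem_supported {S S' : Set (List α)} {a : α} (hS : ∀ l ∈ S, a :: l ∈ S')
    {c : Chain p α} (hc : c ∈ Finsupp.supported (ZMod p) (ZMod p) S) :
    cone a c ∈ Finsupp.supported (ZMod p) (ZMod p) S' := by
  classical
  rw [Finsupp.mem_supported] at *
  intro l hl
  obtain ⟨l', hl', rfl⟩ := mem_image.1 (Finsupp.mapDomain_support hl)
  exact hS l' (hc hl')

lemma push_mem_supported {S : Set (List α)} {S' : Set (List β)} {f : α → β}
    (hS : ∀ l ∈ S, l.map f ∈ S') {c : Chain p α}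
    (hc : c ∈ Finsupp.supported (ZMod p) (ZMod p) S) :
    push f c ∈ Finsupp.supported (ZMod p) (ZMod p) S' := by
  classical
  rw [Finsupp.mem_supported] at *
  intro l hl
  obtain ⟨l', hl', rfl⟩ := mem_image.1 (Finsupp.mapDomain_support hl)
  exact hS l' (hc hl')

lemma linearCombination_mem {S : Set (List α)} {g : List α → Chain p β}
    {W : Submodule (ZMod p) (Chain p β)} (hS : ∀ l ∈ S, g l ∈ W) {c : Chain p α}
    (hc : c ∈ Finsupp.supported (ZMod p) (ZMod p) S) :
    Finsupp.linearCombination (ZMod p) g c ∈ W :=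
  W.sum_mem fun l hl => W.smul_mem _ (hS l (hc hl))

lemma bdList_mem_supported (l : List α) :
    (bdList l : Chain p α) ∈ Finsupp.supported (ZMod p) (ZMod p)
      {l' | l'.Sublist l ∧ l'.length + 1 = l.length} := by
  induction l with
  | nil => simp [bdList]
  | cons a l ih =>
    refine Submodule.sub_mem _ (Finsupp.single_mem_supported _ _ ⟨by simp, by simp⟩)
      (cone_mem_supported ?_ ih)
    rintro l' ⟨h1, h2⟩
    exact ⟨h1.cons_cons a, by simp [h2]⟩

lemma push_push_shift {φ : ZMod p → α → α} (hφ : IsShift φ) (g h : ZMod p) (c : Chain p α) :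
    push (φ g) (push (φ h) c) = push (φ (g + h)) c := by
  induction c using Finsupp.induction_linear with
  | zero => simp
  | add f g hf hg => simp only [map_add, hf, hg]
  | single l r => simp only [push_single, hφ.map_map]

lemma norm_list_sum_le {E : Type*} [SeminormedAddCommGroup E] {l : List E} {r : ℝ}
    (h : ∀ x ∈ l, ‖x‖ ≤ r) :
    ‖l.sum‖ ≤ l.length * r := by
  induction l with
  | nil => simp
  | cons a l ih =>
    simp only [List.mem_cons, forall_eq_or_imp] at h
    have := ih h.2
    have := norm_add_le a l.sum
    simp only [List.sum_cons, List.length_cons, Nat.cast_succ]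
    linarith [h.1]

end Supported

section Subdivision

variable {p : ℕ} {V : Type*} [NormedAddCommGroup V] [NormedSpace ℝ V]

/-- The barycenter of a tuple. -/
noncomputable def bary (l : List V) : V := (l.length : ℝ)⁻¹ • l.sum

/-- Barycentric subdivision of a single tuple of length `n`. -/
noncomputable def sdList : ℕ → List V → Chain p V
  | 0, l => Finsupp.single l 1
  | n + 1, l => cone (bary l) (Finsupp.linearCombination (ZMod p) (sdList n) (bdList l))

/-- Barycentric subdivision of chains of tuples of length `n`. -/
noncomputable def sd (n : ℕ) : Chain p V →ₗ[ZMod p] Chain p V :=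
  Finsupp.linearCombination (ZMod p) (sdList n)

lemma sd_zero (c : Chain p V) : sd 0 c = c := by
  induction c using Finsupp.induction_linear with
  | zero => simp
  | add f g hf hg => simp only [map_add, hf, hg]
  | single l r => simp [sd, sdList]

lemma sd_succ_single (n : ℕ) (l : List V) (r : ZMod p) :
    sd (n + 1) (Finsupp.single l r) = r • cone (bary l) (sd n (bdList l)) := by
  simp [sd, sdList]

lemma bd_sd_succ (n : ℕ) (c : Chain p V) : bd (sd (n + 1) c) = sd n (bd c) := by
  induction n generalizing c with
  | zero =>
    induction c using Finsupp.induction_linear with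
    | zero => simp
    | add f g hf hg => simp only [map_add, hf, hg]
    | single l r => simp [sd_succ_single, bd_cone, sd_zero, bd_bdList]
  | succ n ih =>
    induction c using Finsupp.induction_linear with
    | zero => simp
    | add f g hf hg => simp only [map_add, hf, hg]
    | single l r => rw [sd_succ_single]; simp [bd_cone, ih, bd_bdList]

lemma bary_map (f : V →ₗ[ℝ] V) (l : List V) : bary (l.map f) = f (bary l) := by
  simp [bary, map_list_sum]

lemma push_sd (f : V →ₗ[ℝ] V) (n : ℕ) (c : Chain p V) :
    push f (sd n c) = sd n (push f c) := by
  induction n generalizing c with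
  | zero => simp [sd_zero]
  | succ n ih =>
    induction c using Finsupp.induction_linear with
    | zero => simp
    | add f g hf hg => simp only [map_add, hf, hg]
    | single l r => simp [sd_succ_single, push_cone, ih, push_bdList, bary_map]

lemma bary_mem {K : Set V} (hK : Convex ℝ K) {l : List V} (hl : l ≠ [])
    (h : ∀ x ∈ l, x ∈ K) : bary l ∈ K := by
  have hn : (l.length : ℝ) ≠ 0 := by simpa using hl
  rw [bary, ← Fin.sum_univ_getElem l, smul_sum]
  refine hK.sum_mem (fun _ _ => by positivity) ?_ fun i _ => h _ (List.getElem_mem _)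
  simp [hn]

lemma dist_bary_le {l : List V} {r : ℝ} (M : ℕ) (hM : l.length ≤ M + 1) (hr : 0 ≤ r)
    (h : ∀ x ∈ l, ∀ y ∈ l, dist x y ≤ r) {x : V} (hx : x ∈ l) :
    dist x (bary l) ≤ M / (M + 1) * r := by
  obtain ⟨s, t, rfl⟩ := List.append_of_mem hx
  set n := (s ++ x :: t).length with hn
  have hn' : n = (s ++ t).length + 1 := by simp [hn]; ring
  have hpos : (0 : ℝ) < n := by rw [hn']; positivity
  have hsum : ∀ l : List V, (l.map fun y => x - y).sum = (l.length : ℝ) • x - l.sum := by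
    intro l
    induction l with
    | nil => simp
    | cons a l ih => simp [ih, add_smul]; abel
  have hle : ‖((s ++ t).map fun y => x - y).sum‖ ≤ (n - 1) * r := by
    refine (norm_list_sum_le (r := r) ?_).trans_eq ?_
    · intro z hz
      obtain ⟨y, hy, rfl⟩ := List.mem_map.1 hz
      rw [← dist_eq_norm]
      refine h x hx y ?_
      simp only [List.mem_append, List.mem_cons] at hy ⊢
      tauto
    · rw [List.length_map, hn']; simp
  have hb : x - bary (s ++ x :: t) = (n : ℝ)⁻¹ • ((s ++ t).map fun y => x - y).sum := by
    rw [hsum, smul_sub, bary, ← hn, show ((s ++ t).length : ℝ) = n - 1 by rw [hn']; simp,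
      smul_smul, mul_sub, inv_mul_cancel₀ hpos.ne', sub_smul, one_smul, mul_one]
    simp only [List.sum_append, List.sum_cons, smul_add]
    abel
  rw [dist_eq_norm, hb, norm_smul, norm_inv, Real.norm_natCast]
  have hnM : (n : ℝ) ≤ M + 1 := by exact_mod_cast hM
  calc (n : ℝ)⁻¹ * ‖((s ++ t).map fun y => x - y).sum‖ ≤ (n : ℝ)⁻¹ * ((n - 1) * r) := by gcongr
    _ = (n - 1) / n * r := by field_simp
    _ ≤ M / (M + 1) * r := by
      refine mul_le_mul_of_nonneg_right ?_ hr
      rw [div_le_div_iff₀ hpos (by positivity)]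
      nlinarith

lemma sdList_mem_supported (M : ℕ) {n : ℕ} {l : List V} {r : ℝ} {K : Set V} (hn : l.length = n)
    (hM : n ≤ M + 1) (hr : 0 ≤ r) (hK : Convex ℝ K) (hl : ∀ x ∈ l, x ∈ K)
    (hd : ∀ x ∈ l, ∀ y ∈ l, dist x y ≤ r) :
    (sdList n l : Chain p V) ∈ Finsupp.supported (ZMod p) (ZMod p)
      {l' | l'.length = n ∧ (∀ x ∈ l', x ∈ K) ∧
        ∀ x ∈ l', ∀ y ∈ l', dist x y ≤ M / (M + 1) * r} := by
  induction n generalizing l K with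
  | zero =>
    rw [List.length_eq_zero_iff] at hn
    subst hn
    exact Finsupp.single_mem_supported _ _ (by simp)
  | succ n ih =>
    have hne : l ≠ [] := by rintro rfl; simp at hn
    have hr' : 0 ≤ M / (M + 1) * r := by positivity
    set B := Metric.closedBall (bary l) (M / (M + 1) * r)
    refine cone_mem_supported (S := {l' | l'.length = n ∧ (∀ x ∈ l', x ∈ K ∩ B) ∧
        ∀ x ∈ l', ∀ y ∈ l', dist x y ≤ M / (M + 1) * r}) ?_
      (linearCombination_mem ?_ (bdList_mem_supported l))
    · rintro l' ⟨h1, h2, h3⟩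
      refine ⟨by simp [h1], ?_, ?_⟩
      · simp only [List.mem_cons, forall_eq_or_imp]
        exact ⟨bary_mem hK hne hl, fun x hx => (h2 x hx).1⟩
      · simp only [List.mem_cons, forall_eq_or_imp, dist_self]
        exact ⟨⟨hr', fun y hy => by rw [dist_comm]; exact (h2 y hy).2⟩,
          fun x hx => ⟨(h2 x hx).2, h3 x hx⟩⟩
    · rintro l' ⟨h1, h2⟩
      refine ih (by omega) (by omega) (hK.inter (convex_closedBall _ _)) (fun x hx => ?_)
        fun x hx y hy => hd x (h1.subset hx) y (h1.subset hy)
      exact ⟨hl x (h1.subset hx), dist_bary_le M (by omega) hr hd (h1.subset hx)⟩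

end Subdivision

section Resolving

variable {p : ℕ} [NeZero p] {α β : Type*}

lemma push_pushNorm {φ : ZMod p → α → α} (hφ : IsShift φ) (c : Chain p α) :
    push (φ 1) (pushNorm φ c) = pushNorm φ c := by
  simp only [pushNorm, map_sum, push_push_shift hφ]
  exact Fintype.sum_equiv (Equiv.addLeft (1 : ZMod p)) _ _ fun g => rfl

lemma pushNorm_push {φ : ZMod p → α → α} (hφ : IsShift φ) (c : Chain p α) :
    pushNorm φ (push (φ 1) c) = pushNorm φ c := by
  simp only [pushNorm, push_push_shift hφ]
  exact Fintype.sum_equiv (Equiv.addRight (1 : ZMod p)) _ _ fun g => rfl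

/-- The resolving sequence obtained by successive coning with apices `a 1, a 2, …`. -/
noncomputable def coneSeq (φ : ZMod p → α → α) (a : ℕ → α) : ℕ → Chain p α
  | 0 => Finsupp.single [a 0] 1
  | i + 1 => cone (a (i + 1)) (if Even i then push (φ 1) (coneSeq φ a i) - coneSeq φ a i
      else pushNorm φ (coneSeq φ a i))

lemma bd_pushNorm (φ : ZMod p → α → α) (c : Chain p α) :
    bd (pushNorm φ c) = pushNorm φ (bd c) := by
  simp only [pushNorm, map_sum, push_bd]

lemma isResolving_coneSeq {φ : ZMod p → α → α} (hφ : IsShift φ) (a : ℕ → α) (J : ℕ) :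
    IsResolving φ J (coneSeq φ a) := by
  have step : ∀ j, bd (coneSeq φ a (2 * j + 1)) =
      push (φ 1) (coneSeq φ a (2 * j)) - coneSeq φ a (2 * j) →
      bd (coneSeq φ a (2 * j + 2)) = pushNorm φ (coneSeq φ a (2 * j + 1)) := by
    intro j hj
    rw [coneSeq, if_neg (by simp), bd_cone, bd_pushNorm, hj]
    have : pushNorm φ (push (φ 1) (coneSeq φ a (2 * j)) - coneSeq φ a (2 * j)) = 0 := by
      have hsub : ∀ c d : Chain p α, pushNorm φ (c - d) = pushNorm φ c - pushNorm φ d := by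
        intro c d
        simp [pushNorm]
      rw [hsub, pushNorm_push hφ, sub_self]
    rw [this, map_zero, sub_zero]
  have key : ∀ j, bd (coneSeq φ a (2 * j + 1)) =
      push (φ 1) (coneSeq φ a (2 * j)) - coneSeq φ a (2 * j) := by
    intro j
    have h0 : push (φ 1) (bd (coneSeq φ a (2 * j))) - bd (coneSeq φ a (2 * j)) = 0 →
        bd (coneSeq φ a (2 * j + 1)) =
          push (φ 1) (coneSeq φ a (2 * j)) - coneSeq φ a (2 * j) := by
      intro h
      rw [coneSeq, if_pos (by simp), bd_cone, map_sub, ← push_bd, h, map_zero, sub_zero]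
    induction j with
    | zero => exact h0 (by simp [coneSeq, bdList])
    | succ j ih =>
      refine h0 ?_
      rw [show 2 * (j + 1) = 2 * j + 2 by ring, step j (ih ?_), push_pushNorm hφ, sub_self]
      intro h
      rw [coneSeq, if_pos (by simp), bd_cone, map_sub, ← push_bd, h, map_zero, sub_zero]
  exact ⟨⟨a 0, rfl⟩, fun j _ => key j, fun j _ => step j (key j)⟩

lemma coneSeq_mem_supported {φ : ZMod p → α → α} (hφ : IsShift φ) (a : ℕ → α) (i : ℕ) :
    coneSeq φ a i ∈ Finsupp.supported (ZMod p) (ZMod p)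
      {l | l.length = i + 1 ∧ ∃ g : ℕ → ZMod p, ∀ x ∈ l, ∃ j ≤ i, x = φ (g j) (a j)} := by
  induction i with
  | zero =>
    exact Finsupp.single_mem_supported _ _ ⟨rfl, 0, fun x hx => ⟨0, le_rfl, by
      rw [List.mem_singleton] at hx
      simp [hx, hφ.zero]⟩⟩
  | succ i ih =>
    have hpush : ∀ g, push (φ g) (coneSeq φ a i) ∈ Finsupp.supported (ZMod p) (ZMod p)
        {l | l.length = i + 1 ∧ ∃ g : ℕ → ZMod p, ∀ x ∈ l, ∃ j ≤ i, x = φ (g j) (a j)} := by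
      intro g
      refine push_mem_supported ?_ ih
      rintro l ⟨h1, g', h2⟩
      refine ⟨by simp [h1], fun j => g + g' j, fun x hx => ?_⟩
      obtain ⟨y, hy, rfl⟩ := List.mem_map.1 hx
      obtain ⟨j, hj, rfl⟩ := h2 y hy
      exact ⟨j, hj, (hφ.add _ _ _).symm⟩
    rw [coneSeq]
    refine cone_mem_supported (S := {l | l.length = i + 1 ∧
      ∃ g : ℕ → ZMod p, ∀ x ∈ l, ∃ j ≤ i, x = φ (g j) (a j)}) ?_ ?_
    · rintro l ⟨h1, g, h2⟩
      refine ⟨by simp [h1], Function.update g (i + 1) 0, fun x hx => ?_⟩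
      rcases List.mem_cons.1 hx with rfl | hx
      · exact ⟨i + 1, le_rfl, by simp [hφ.zero]⟩
      · obtain ⟨j, hj, rfl⟩ := h2 x hx
        exact ⟨j, by omega, by rw [Function.update_of_ne (by omega)]⟩
    · split_ifs
      · exact Submodule.sub_mem _ (hpush 1) ih
      · exact Submodule.sum_mem _ fun g _ => hpush g

lemma IsResolving.sd {V : Type*} [NormedAddCommGroup V] [NormedSpace ℝ V]
    {φ : ZMod p → V →ₗ[ℝ] V} {J : ℕ} {h : ℕ → Chain p V}
    (hh : IsResolving (fun g => φ g) J h) :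
    IsResolving (fun g => φ g) J (fun i => CyclicChains.sd (i + 1) (h i)) where
  start := by
    obtain ⟨a, ha⟩ := hh.start
    exact ⟨bary [a], by simp [ha, sd_succ_single, sd_zero, bdList]⟩
  odd j hj := by simp only [bd_sd_succ, hh.odd j hj, map_sub, push_sd]
  even j hj := by
    rw [bd_sd_succ, hh.even j hj]
    simp only [pushNorm, map_sum, push_sd]

lemma IsResolving.push {φ : ZMod p → α → α} {ψ : ZMod p → β → β} {J : ℕ} {h : ℕ → Chain p α}
    (hh : IsResolving φ J h) (f : α → β)
    (hf : ∀ i ≤ 2 * J, ∀ l ∈ (h i).support, ∀ x ∈ l, ∀ g, f (φ g x) = ψ g (f x)) :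
    IsResolving ψ J (fun i => CyclicChains.push f (h i)) := by
  have comm : ∀ i ≤ 2 * J, ∀ g, CyclicChains.push f (CyclicChains.push (φ g) (h i)) =
      CyclicChains.push (ψ g) (CyclicChains.push f (h i)) := by
    intro i hi g
    simp only [CyclicChains.push, Finsupp.lmapDomain_apply, ← Finsupp.mapDomain_comp]
    refine Finsupp.mapDomain_congr fun l hl => ?_
    simp only [Function.comp_apply, List.map_map, List.map_inj_left]
    exact fun x hx => hf i hi l hl x hx g
  refine ⟨?_, fun j hj => ?_, fun j hj => ?_⟩
  · obtain ⟨a, ha⟩ := hh.start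
    exact ⟨f a, by simp [ha]⟩
  · simp only [← push_bd, hh.odd j hj, map_sub, comm (2 * j) (by omega)]
  · rw [← push_bd, hh.even j hj]
    simp only [pushNorm, map_sum, comm (2 * j + 1) (by omega)]

end Resolving

section EquivariantChoice

variable {p : ℕ} [Fact p.Prime] {β : Type*}

lemma eq_of_periodic {u : ZMod p → β} {e : ZMod p} (he : e ≠ 0) (hu : ∀ k, u (k + e) = u k)
    (k k' : ZMod p) : u k = u k' := by
  have h : ∀ n : ℕ, ∀ k, u (k + n * e) = u k := by
    intro n
    induction n with
    | zero => simp
    | succ n ih =>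
      intro k
      rw [Nat.cast_succ, add_mul, one_mul, ← add_assoc, hu, ih]
  have := h ((k - k') * e⁻¹).val k'
  rw [ZMod.natCast_zmod_val, mul_assoc, inv_mul_cancel₀ he, mul_one, add_sub_cancel] at this
  exact this

/-- The free part of the translation action on functions on `ZMod p` maps equivariantly to
`ZMod p`. -/
lemma exists_equivariant (p : ℕ) [Fact p.Prime] (β : Type*) :
    ∃ S : (ZMod p → β) → ZMod p, ∀ u, (∃ k k', u k ≠ u k') →
      ∀ g, S (fun k => u (k + g)) = S u - g := by
  let r : Setoid (ZMod p → β) :=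
    { r := fun u v => ∃ g, ∀ k, u k = v (k + g)
      iseqv :=
        { refl := fun u => ⟨0, by simp⟩
          symm := fun {u v} ⟨g, hg⟩ => ⟨-g, fun k => by simp [hg]⟩
          trans := fun {u v w} ⟨g, hg⟩ ⟨h, hh⟩ => ⟨g + h, fun k => by
            rw [hg, hh, add_assoc]⟩ } }
  have hex : ∀ u : ZMod p → β, ∃ g, ∀ k, u k = (Quotient.mk r u).out (k + g) := fun u =>
    r.symm (Quotient.mk_out (s := r) u)
  choose c hc using hex
  refine ⟨fun u => - c u, fun u hu g => ?_⟩
  have hrep : (Quotient.mk r fun k => u (k + g)) = Quotient.mk r u :=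
    Quotient.sound (s := r) ⟨g, fun k => rfl⟩
  have h1 := hc fun k => u (k + g)
  rw [hrep] at h1
  by_contra hne
  obtain ⟨k, k', hk⟩ := hu
  refine hk (eq_of_periodic (e := c (fun k => u (k + g)) - (c u + g)) ?_ (fun j => ?_) k k')
  · intro h0
    apply hne
    simp only [sub_eq_zero.1 h0]
    ring
  · have h2 := h1 (j - g - c u + c u)
    rw [hc u (j + _)]
    have e1 : j + (c (fun k => u (k + g)) - (c u + g)) + c u =
        j - g + c (fun k => u (k + g)) := by ring
    rw [e1, ← h1 (j - g), sub_add_cancel]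

/-- Equivariant choice of a point where a function on `ZMod p` is maximal. -/
lemma exists_equivariant_argmax (p : ℕ) [Fact p.Prime] :
    ∃ K : (ZMod p → ℝ) → ZMod p, (∀ (u : ZMod p → ℝ) k, u k ≤ u (K u)) ∧
      ∀ u : ZMod p → ℝ, (∃ k k', u k ≠ u k') → ∀ g, K (fun k => u (k + g)) = K u - g := by
  obtain ⟨S, hS⟩ := exists_equivariant p ℝ
  choose K₀ hK₀ using fun u : ZMod p → ℝ => Finite.exists_max u
  refine ⟨fun u => K₀ (fun k => u (k + S u)) + S u, fun u k => ?_, fun u hu g => ?_⟩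
  · simpa using hK₀ (fun k => u (k + S u)) (k - S u)
  · have : (fun k => u (k + (S u - g) + g)) = fun k => u (k + S u) := by
      ext k; congr 1; ring
    simp only [hS u hu, this]
    ring

end EquivariantChoice

section Labels

variable {p m : ℕ} [Fact p.Prime]

/-- The translation action on labels. -/
def labelShift (p m : ℕ) (g : ZMod p) (a : Fin m × ZMod p) : Fin m × ZMod p := (a.1, a.2 - g)

lemma isShift_labelShift : IsShift (labelShift p m) where
  zero a := by simp [labelShift]
  add g h a := by simp only [labelShift]; congr 1; ring

/-- Nonempty tuples of labels that contain no complete block. -/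
def NoFullBlock (l : List (Fin m × ZMod p)) : Prop :=
  l ≠ [] ∧ ∀ t, ∃ k, (t, k) ∉ l

lemma mem_map_labelShift (g : ZMod p) (l : List (Fin m × ZMod p)) (t : Fin m) (k : ZMod p) :
    (t, k) ∈ l.map (labelShift p m g) ↔ (t, k + g) ∈ l := by
  simp only [List.mem_map, labelShift, Prod.exists, Prod.mk.injEq]
  constructor
  · rintro ⟨t', k', h, rfl, rfl⟩
    simpa using h
  · exact fun h => ⟨t, k + g, h, rfl, by ring⟩

lemma exists_isFreeComplex_noFullBlock (hm : 0 < m) :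
    ∃ s, IsFreeComplex (labelShift p m) NoFullBlock s := by
  classical
  obtain ⟨K, -, hK⟩ := exists_equivariant_argmax p
  have : Nonempty (Fin m) := ⟨⟨0, hm⟩⟩
  let ind : List (Fin m × ZMod p) → Fin m → ZMod p → ℝ := fun l t k => if (t, k) ∈ l then 1 else 0
  let t₀ : List (Fin m × ZMod p) → Fin m := fun l =>
    Classical.epsilon fun t => ∃ k k', ind l t k ≠ ind l t k'
  have hind : ∀ g l t, ind (l.map (labelShift p m g)) t = fun k => ind l t (k + g) := by
    intro g l t
    ext k
    simp only [ind, mem_map_labelShift]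
  have ht₀ : ∀ g l, t₀ (l.map (labelShift p m g)) = t₀ l := by
    intro g l
    simp only [t₀, hind]
    congr 1
    ext t
    constructor
    · rintro ⟨k, k', h⟩
      exact ⟨_, _, h⟩
    · rintro ⟨k, k', h⟩
      exact ⟨k - g, k' - g, by simpa using h⟩
  have hspec : ∀ l, NoFullBlock l → ∃ k k', ind l (t₀ l) k ≠ ind l (t₀ l) k' := by
    rintro l ⟨hl, hb⟩
    obtain ⟨⟨t, k⟩, hk⟩ := List.exists_mem_of_ne_nil l hl
    obtain ⟨k', hk'⟩ := hb t
    exact Classical.epsilon_spec (p := fun t => ∃ k k', ind l t k ≠ ind l t k')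
      ⟨t, k, k', by simp [ind, hk, hk']⟩
  refine ⟨fun l => - K (ind l (t₀ l)), isShift_labelShift, fun h => h.1 rfl, ?_, ?_, ?_, ?_, ?_⟩
  · rintro l l' ⟨_, hb⟩ hs hne
    exact ⟨hne, fun t => (hb t).imp fun k hk h => hk (hs.subset h)⟩
  · intro l l' h
    simp only [NoFullBlock, h.mem_iff, ne_eq, ← List.length_eq_zero_iff, h.length_eq]
  · intro g l
    simp only [NoFullBlock, mem_map_labelShift, ne_eq, List.map_eq_nil_iff]
    refine and_congr_right fun _ => forall_congr' fun t => ⟨?_, ?_⟩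
    · rintro ⟨k, hk⟩
      exact ⟨_, hk⟩
    · rintro ⟨k, hk⟩
      exact ⟨k - g, by simpa using hk⟩
  · intro l l' h
    have : ind l = ind l' := by
      ext t k
      simp only [ind, h.mem_iff]
    simp only [t₀, this]
  · intro g l hl
    simp only [ht₀, hind, hK _ (hspec l hl) g]
    ring

lemma NoFullBlock.length_le {l : List (Fin m × ZMod p)} (hl : NoFullBlock l) (hnd : l.Nodup) :
    l.length ≤ m * (p - 1) := by
  classical
  choose κ hκ using hl.2
  have hdisj : Disjoint l.toFinset (univ.image fun t => (t, κ t)) := by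
    rw [disjoint_right]
    intro a ha
    obtain ⟨t, -, rfl⟩ := mem_image.1 ha
    simpa using hκ t
  have hinj : Function.Injective fun t : Fin m => (t, κ t) := fun t t' h => congrArg Prod.fst h
  have := card_le_univ (l.toFinset ∪ univ.image fun t => (t, κ t))
  rw [card_union_of_disjoint hdisj, List.toFinset_card_of_nodup hnd,
    card_image_of_injective _ hinj, card_univ, Fintype.card_prod, Fintype.card_fin,
    ZMod.card] at this
  rw [Nat.mul_sub, mul_one]
  omega

end Labels

section Faces

variable {p d : ℕ} [Fact p.Prime]

/-- The translation action on `p`-tuples of points. -/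
def tupleShift (p d : ℕ) (g : ZMod p) : (ZMod p → Fin d → ℝ) →ₗ[ℝ] (ZMod p → Fin d → ℝ) :=
  LinearMap.funLeft ℝ _ (· + g)

@[simp] lemma tupleShift_apply (g : ZMod p) (x : ZMod p → Fin d → ℝ) (k : ZMod p) :
    tupleShift p d g x k = x (k + g) := rfl

lemma isShift_tupleShift : IsShift (fun g => tupleShift p d g) where
  zero x := by ext; simp
  add g h x := by ext k t; simp [add_assoc, add_comm g h, add_left_comm]

/-- A face of the `d`-fold join of the boundary of a `(p - 1)`-simplex. -/
def face (κ : Fin d → ZMod p) : Set (ZMod p → Fin d → ℝ) :=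
  {x | (∀ k t, 0 ≤ x k t) ∧ ∑ k, ∑ t, x k t = 1 ∧ ∀ t, x (κ t) t = 0}

lemma convex_face (κ : Fin d → ZMod p) : Convex ℝ (face κ) := by
  rintro x ⟨hx1, hx2, hx3⟩ y ⟨hy1, hy2, hy3⟩ a b ha hb hab
  refine ⟨fun k t => ?_, ?_, fun t => by simp [hx3, hy3]⟩
  · have := hx1 k t
    have := hy1 k t
    simp only [Pi.add_apply, Pi.smul_apply, smul_eq_mul]
    positivity
  · simp only [Pi.add_apply, Pi.smul_apply, smul_eq_mul, sum_add_distrib, ← mul_sum, hx2, hy2,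
      mul_one, hab]

lemma le_one_of_mem_face {κ : Fin d → ZMod p} {x : ZMod p → Fin d → ℝ} (hx : x ∈ face κ)
    (k : ZMod p) (t : Fin d) : x k t ≤ 1 := by
  rw [← hx.2.1]
  exact (single_le_sum (f := fun t => x k t) (fun t _ => hx.1 k t) (mem_univ t)).trans
    (single_le_sum (f := fun k => ∑ t, x k t) (fun k _ => sum_nonneg fun t _ => hx.1 k t)
      (mem_univ k))

lemma isCompact_face (κ : Fin d → ZMod p) : IsCompact (face κ) := by
  refine (isCompact_Icc (a := (0 : ZMod p → Fin d → ℝ)) (b := 1)).of_isClosed_subset ?_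
    fun x hx => ⟨fun k t => hx.1 k t, fun k t => le_one_of_mem_face hx k t⟩
  refine IsClosed.inter ?_ (IsClosed.inter ?_ ?_)
  · exact isClosed_Ici (a := (0 : ZMod p → Fin d → ℝ))
  · exact isClosed_eq (by fun_prop) continuous_const
  · have h3 : IsClosed {x : ZMod p → Fin d → ℝ | (fun t => x (κ t) t) = 0} :=
      isClosed_eq (by fun_prop) continuous_const
    simp only [funext_iff, Pi.zero_apply] at h3
    exact h3

lemma exists_ne_of_mem_face {κ : Fin d → ZMod p} {x : ZMod p → Fin d → ℝ} (hx : x ∈ face κ) :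
    ∃ k k', x k ≠ x k' := by
  by_contra! h
  have h0 : ∀ k t, x k t = 0 := fun k t => by rw [h k (κ t), hx.2.2]
  simpa [h0] using hx.2.1

lemma dist_le_one_of_mem_face {κ : Fin d → ZMod p} {x y : ZMod p → Fin d → ℝ}
    (hx : x ∈ face κ) (hy : y ∈ face κ) : dist x y ≤ 1 := by
  refine (dist_pi_le_iff zero_le_one).2 fun k => (dist_pi_le_iff zero_le_one).2 fun t => ?_
  rw [Real.dist_eq, abs_le]
  have := hx.1 k t
  have := hy.1 k t
  constructor <;> linarith [le_one_of_mem_face hx k t, le_one_of_mem_face hy k t]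

/-- Vertices of the join, `p - 1` of them in each of the `d` blocks. -/
def vertex (p d : ℕ) (j : ℕ) : ZMod p → Fin d → ℝ :=
  fun k t => if k = 0 ∧ t.val = j / (p - 1) then 1 else 0

lemma exists_forall_mem_face (i : ℕ) (hi : i / (p - 1) < d) (g : ℕ → ZMod p) :
    ∃ κ : Fin d → ZMod p, ∀ j ≤ i, tupleShift p d (g j) (vertex p d j) ∈ face κ := by
  classical
  have hp := (Fact.out : p.Prime).two_le
  have hex : ∀ t : Fin d, ∃ k : ZMod p, ∀ j, j / (p - 1) = t.val → k + g j ≠ 0 := by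
    intro t
    by_contra! h
    have hsub : (univ : Finset (ZMod p)) ⊆
        (Ico (t.val * (p - 1)) ((t.val + 1) * (p - 1))).image fun j => - g j := by
      intro k _
      obtain ⟨j, hj, hk⟩ := h k
      refine mem_image.2 ⟨j, ?_, (eq_neg_of_add_eq_zero_left hk).symm⟩
      rw [mem_Ico, ← hj]
      exact ⟨Nat.div_mul_le_self _ _, Nat.lt_mul_of_div_lt (Nat.lt_succ_self _) (by omega)⟩
    have hcard := (card_le_card hsub).trans card_image_le
    rw [card_univ, ZMod.card, Nat.card_Ico, ← Nat.sub_mul, Nat.add_sub_cancel_left,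
      one_mul] at hcard
    omega
  choose κ hκ using hex
  refine ⟨κ, fun j hj => ⟨fun k t => ?_, ?_, fun t => ?_⟩⟩
  · simp only [tupleShift_apply, vertex]
    split_ifs <;> norm_num
  · have hjd : j / (p - 1) < d := (Nat.div_le_div_right hj).trans_lt hi
    rw [sum_eq_single (- g j), sum_eq_single ⟨j / (p - 1), hjd⟩]
    · simp [vertex]
    · intro t _ ht
      simp only [tupleShift_apply, vertex, ite_eq_right_iff]
      rintro ⟨-, h⟩
      exact absurd (Fin.ext h) ht
    · simp
    · intro k _ hk
      refine sum_eq_zero fun t _ => ?_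
      simp only [tupleShift_apply, vertex, ite_eq_right_iff]
      rintro ⟨h, -⟩
      exact absurd (eq_neg_of_add_eq_zero_left h) hk
    · simp
  · simp only [tupleShift_apply, vertex, ite_eq_right_iff]
    rintro ⟨h, h'⟩
    exact absurd h (hκ t j h'.symm)

/-- Resolving sequences on the join can be chosen arbitrarily fine. -/
lemma exists_fine_isResolving (J : ℕ) (hJ : 2 * J / (p - 1) < d) {δ : ℝ} (hδ : 0 < δ) :
    ∃ h : ℕ → Chain p (ZMod p → Fin d → ℝ), IsResolving (fun g => tupleShift p d g) J h ∧
      ∀ i ≤ 2 * J, ∀ l ∈ (h i).support, l.length = i + 1 ∧ (∃ κ, ∀ x ∈ l, x ∈ face κ) ∧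
        ∀ x ∈ l, ∀ y ∈ l, dist x y < δ := by
  set c : ℝ := (2 * J : ℕ) / ((2 * J : ℕ) + 1) with hc
  have hc0 : 0 ≤ c := by positivity
  have hc1 : c < 1 := by rw [hc, div_lt_one (by positivity)]; linarith
  have key : ∀ r : ℕ, ∃ h : ℕ → Chain p (ZMod p → Fin d → ℝ),
      IsResolving (fun g => tupleShift p d g) J h ∧
      ∀ i ≤ 2 * J, h i ∈ Finsupp.supported (ZMod p) (ZMod p)
        {l | l.length = i + 1 ∧ (∃ κ, ∀ x ∈ l, x ∈ face κ) ∧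
          ∀ x ∈ l, ∀ y ∈ l, dist x y ≤ c ^ r} := by
    intro r
    induction r with
    | zero =>
      refine ⟨_, isResolving_coneSeq isShift_tupleShift (vertex p d) J, fun i hi => ?_⟩
      refine Finsupp.supported_mono ?_ (coneSeq_mem_supported isShift_tupleShift (vertex p d) i)
      rintro l ⟨h1, g, h2⟩
      obtain ⟨κ, hκ⟩ := exists_forall_mem_face (d := d) i
        ((Nat.div_le_div_right hi).trans_lt hJ) g
      have hl : ∀ x ∈ l, x ∈ face κ := by
        intro x hx
        obtain ⟨j, hj, rfl⟩ := h2 x hx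
        exact hκ j hj
      exact ⟨h1, ⟨κ, hl⟩, fun x hx y hy => by
        simpa using dist_le_one_of_mem_face (hl x hx) (hl y hy)⟩
    | succ r ih =>
      obtain ⟨h, hh, hsupp⟩ := ih
      refine ⟨_, hh.sd, fun i hi => linearCombination_mem ?_ (hsupp i hi)⟩
      rintro l ⟨h1, ⟨κ, h2⟩, h3⟩
      refine Finsupp.supported_mono ?_ (sdList_mem_supported (2 * J) h1 (by omega)
        (pow_nonneg hc0 r) (convex_face κ) h2 h3)
      rintro l' ⟨h1', h2', h3'⟩
      exact ⟨h1', ⟨κ, h2'⟩, fun x hx y hy => by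
        rw [pow_succ, mul_comm]; exact h3' x hx y hy⟩
  obtain ⟨r, hr⟩ := exists_pow_lt_of_lt_one hδ hc1
  obtain ⟨h, hh, hsupp⟩ := key r
  refine ⟨h, hh, fun i hi l hl => ?_⟩
  obtain ⟨h1, h2, h3⟩ := hsupp i hi hl
  exact ⟨h1, h2, fun x hx y hy => (h3 x hx y hy).trans_lt hr⟩

end Faces

/-- A Borsuk–Ulam type theorem for `ZMod p`: `m` continuous equivariant families of functions on
`ZMod p`, depending on `p` points of `ℝᵈ` with `m < d`, are simultaneously constant at some
nonconstant tuple of points. -/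
theorem exists_forall_const {p m d : ℕ} [Fact p.Prime] (hp : p ≠ 2) (hm : 0 < m) (hmd : m < d)
    (f : (ZMod p → Fin d → ℝ) → Fin m → ZMod p → ℝ) (hf : Continuous f)
    (hequiv : ∀ g x t k, f (tupleShift p d g x) t k = f x t (k + g)) :
    ∃ x : ZMod p → Fin d → ℝ, (∃ k k', x k ≠ x k') ∧ ∀ t k k', f x t k = f x t k' := by
  by_contra! hcon
  have hp2 := (Fact.out : p.Prime).two_le
  have : Nonempty (Fin m) := ⟨⟨0, hm⟩⟩
  set C : Set (ZMod p → Fin d → ℝ) := ⋃ κ, face κ with hC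
  have hCc : IsCompact C := isCompact_iUnion fun κ => isCompact_face κ
  obtain ⟨ε, hε, hgap⟩ : ∃ ε > 0, ∀ x ∈ C, ∃ t k k', f x t k' + ε ≤ f x t k := by
    let G : (ZMod p → Fin d → ℝ) → (Fin m × ZMod p × ZMod p → ℝ) :=
      fun x a => f x a.1 a.2.1 - f x a.1 a.2.2
    have hG : Continuous G := by fun_prop
    have hpos : ∀ x ∈ C, 0 < ‖G x‖ := by
      intro x hx
      obtain ⟨κ, hκ⟩ := Set.mem_iUnion.1 hx
      obtain ⟨t, k, k', h⟩ := hcon x (exists_ne_of_mem_face hκ)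
      refine norm_pos_iff.2 fun h0 => h ?_
      have := congrFun h0 (t, k, k')
      simpa [G, sub_eq_zero] using this
    obtain ⟨ε, hε, hεle⟩ := hCc.exists_forall_le' hG.norm.continuousOn hpos
    refine ⟨ε, hε, fun x hx => ?_⟩
    by_contra! hlt
    refine absurd (hεle x hx) (not_le.2 ((pi_norm_lt_iff hε).2 ?_))
    rintro ⟨t, k, k'⟩
    rw [Real.norm_eq_abs, abs_lt]
    have h1 := hlt t k k'
    have h2 := hlt t k' k
    simp only [G]
    constructor <;> linarith
  obtain ⟨δ, hδ, hunif⟩ := Metric.uniformContinuousOn_iff.1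
    (hCc.uniformContinuousOn_of_continuous hf.continuousOn) (ε / 2) (by positivity)
  obtain ⟨q, hq⟩ : ∃ q, p = 2 * q + 1 :=
    (Fact.out : p.Prime).odd_of_ne_two hp
  have hJ : 2 * (m * q) = m * (p - 1) := by
    rw [hq, Nat.add_sub_cancel]
    ring
  obtain ⟨h, hh, hfine⟩ := exists_fine_isResolving (p := p) (d := d) (m * q)
    (by rwa [hJ, Nat.mul_div_cancel _ (by omega)]) hδ
  obtain ⟨K, hKmax, hK⟩ := exists_equivariant_argmax p
  let Q : (ZMod p → Fin d → ℝ) → Fin m → Prop := fun x t => ∃ k k', f x t k' + ε ≤ f x t k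
  let τ : (ZMod p → Fin d → ℝ) → Fin m := fun x => Classical.epsilon (Q x)
  have hτ : ∀ x ∈ C, Q x (τ x) := fun x hx => Classical.epsilon_spec (hgap x hx)
  have hτshift : ∀ g x, τ (tupleShift p d g x) = τ x := by
    intro g x
    simp only [τ]
    congr 1
    ext t
    simp only [Q, hequiv]
    constructor
    · rintro ⟨k, k', h⟩
      exact ⟨_, _, h⟩
    · rintro ⟨k, k', h⟩
      exact ⟨k - g, k' - g, by simpa using h⟩
  let lab : (ZMod p → Fin d → ℝ) → Fin m × ZMod p := fun x => (τ x, K (f x (τ x)))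
  have hmem : ∀ i ≤ 2 * (m * q), ∀ l ∈ (h i).support, ∀ x ∈ l, x ∈ C := by
    intro i hi l hl x hx
    obtain ⟨-, ⟨κ, hκ⟩, -⟩ := hfine i hi l hl
    exact Set.mem_iUnion.2 ⟨κ, hκ x hx⟩
  have hlab := hh.push (ψ := labelShift p m) lab (by
    intro i hi l hl x hx g
    obtain ⟨k, k', hkk⟩ := hτ x (hmem i hi l hl x hx)
    simp only [lab, labelShift, hτshift]
    rw [show f (tupleShift p d g x) (τ x) = fun k => f x (τ x) (k + g) from
      funext fun k => hequiv g x _ k, hK _ ⟨k, k', by intro h; linarith⟩ g])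
  have hsupp : ∀ i ≤ 2 * (m * q), push lab (h i) ∈ Finsupp.supported (ZMod p) (ZMod p)
      {l | l.length = i + 1 ∧ NoFullBlock l} := by
    intro i hi
    refine push_mem_supported (S := (h i).support) ?_ ((Finsupp.mem_supported _ _).2 le_rfl)
    intro l hl
    obtain ⟨hlen, -, hdist⟩ := hfine i hi l hl
    refine ⟨by simp [hlen], ?_, fun t => ?_⟩
    · intro h0
      simp [List.map_eq_nil_iff.1 h0] at hlen
    · by_contra! hfull
      have hpt : ∀ k, ∃ x ∈ l, τ x = t ∧ K (f x t) = k := by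
        intro k
        obtain ⟨x, hx, hxk⟩ := List.mem_map.1 (hfull k)
        obtain ⟨rfl, h2⟩ := Prod.mk.inj hxk
        exact ⟨x, hx, rfl, h2⟩
      obtain ⟨x, hx, rfl, -⟩ := hpt 0
      obtain ⟨k, k', hkk⟩ := hτ x (hmem i hi l hl x hx)
      obtain ⟨y, hy, -, hyk⟩ := hpt k'
      have hmax := hKmax (f y (τ x)) k
      rw [hyk] at hmax
      have hxy := hunif x (hmem i hi l hl x hx) y (hmem i hi l hl y hy) (hdist x hx y hy)
      have hc : ∀ j, |f x (τ x) j - f y (τ x) j| < ε / 2 := by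
        intro j
        rw [← Real.dist_eq]
        exact (dist_le_pi_dist (f x (τ x)) (f y (τ x)) j).trans_lt
          ((dist_le_pi_dist (f x) (f y) (τ x)).trans_lt hxy)
      have h1 := abs_lt.1 (hc k)
      have h2 := abs_lt.1 (hc k')
      linarith [h1.1, h1.2, h2.1, h2.2]
  obtain ⟨s, hs⟩ := exists_isFreeComplex_noFullBlock (p := p) hm
  obtain ⟨l, hl, hnd⟩ := hs.exists_nodup_of_isResolving hp hlab
    fun i hi l hl => (hsupp i hi hl).2
  obtain ⟨hlen, hblock⟩ := hsupp _ le_rfl hl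
  have := hblock.length_le hnd
  omega

end CyclicChains

lemma IsMetricEquivToStd.continuous {E : Type*} [TopologicalSpace E] {ρ : E → E → ℝ}
    (hρ : IsMetricEquivToStd ρ) : Continuous fun z : E × E => ρ z.1 z.2 := by
  obtain ⟨hsymm, hzero, htri, hopen⟩ := hρ
  have hself : ∀ x, ρ x x = 0 := fun x => (hzero x x).2 rfl
  have hball : ∀ x, ∀ ε > 0, ∀ᶠ y in nhds x, ρ x y < ε := by
    intro x ε hε
    refine IsOpen.mem_nhds ((hopen {y | ρ x y < ε}).2 fun y hy => ?_) (by simpa [hself] using hε)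
    refine ⟨ε - ρ x y, sub_pos.2 hy, fun z (hz : ρ y z < ε - ρ x y) => ?_⟩
    have := htri x y z
    show ρ x z < ε
    linarith
  rw [continuous_iff_continuousAt]
  rintro ⟨x, y⟩
  rw [ContinuousAt, Metric.tendsto_nhds]
  intro ε hε
  rw [nhds_prod_eq]
  filter_upwards [(hball x (ε / 2) (by positivity)).prod_mk (hball y (ε / 2) (by positivity))]
  rintro ⟨x', y'⟩ ⟨hx, hy⟩
  simp only at hx hy
  rw [Real.dist_eq, abs_lt]
  constructor
  · linarith [htri x x' y, htri x' y' y, hsymm y y']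
  · linarith [htri x' x y', htri x y y', hsymm x x']

/-- Corollary: for `d > (p-1)/2` and a single metric `ρ` equivalent to the Euclidean
metric, there are `p` distinct points such that every `p`-gon `C_t`,
`t = 1, …, (p-1)/2`, is `ρ`-equilateral. -/
theorem exists_pgons_all_equilateral_one_metric
    (p d : ℕ) (hp : p.Prime) (hodd : Odd p) (hd : 0 < d) (hdr : d > (p - 1) / 2)
    (ρ : EuclideanSpace ℝ (Fin d) → EuclideanSpace ℝ (Fin d) → ℝ)
    (hρ : IsMetricEquivToStd ρ) :
    ∃ x : ZMod p → EuclideanSpace ℝ (Fin d),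
      Function.Injective x ∧
      ∀ t : ℕ, 1 ≤ t → t ≤ (p - 1) / 2 →
        ∀ k : ZMod p,
          ρ (x (k * (t : ZMod p))) (x ((k + 1) * (t : ZMod p))) =
            ρ (x 0) (x (t : ZMod p)) := by
  have : Fact p.Prime := ⟨hp⟩
  have hp2 : p ≠ 2 := by rintro rfl; exact absurd hodd (by decide)
  obtain ⟨q, hq⟩ := hodd
  have hq' : (p - 1) / 2 = q := by omega
  have hp3 := hp.two_le
  rw [hq'] at hdr ⊢
  have hcont := hρ.continuous
  let e : (Fin d → ℝ) → EuclideanSpace ℝ (Fin d) := WithLp.toLp 2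
  have he : Continuous e := PiLp.continuous_toLp 2 _
  obtain ⟨x, ⟨k₀, k₁, hne⟩, hx⟩ := CyclicChains.exists_forall_const (p := p) (m := q) (d := d)
    hp2 (by omega) hdr
    (fun x t k => ρ (e (x k)) (e (x (k + ((t.val + 1 : ℕ) : ZMod p)))))
    (continuous_pi fun t => continuous_pi fun k => hcont.comp
      ((he.comp (continuous_apply _)).prodMk (he.comp (continuous_apply _))))
    (fun g x t k => by simp only [CyclicChains.tupleShift_apply, add_right_comm])
  have hx' : ∀ t : ℕ, 1 ≤ t → t ≤ q → ∀ k k' : ZMod p,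
      ρ (e (x k)) (e (x (k + t))) = ρ (e (x k')) (e (x (k' + t))) := by
    intro t h1 h2 k k'
    have := hx ⟨t - 1, by omega⟩ k k'
    simpa only [Nat.sub_add_cancel h1] using this
  have hzero := hρ.2.1
  have hstep : ∀ t : ℕ, 1 ≤ t → t ≤ q → ∀ k, x k ≠ x (k + t) := by
    intro t h1 h2 k h
    have ht0 : (t : ZMod p) ≠ 0 := by
      rw [Ne, ZMod.natCast_eq_zero_iff]
      exact fun hdvd => absurd (Nat.le_of_dvd h1 hdvd) (by omega)
    refine hne (CyclicChains.eq_of_periodic ht0 (fun j => ?_) k₀ k₁)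
    have h3 := hx' t h1 h2 j k
    rw [← h, (hzero _ _).2 rfl, hzero] at h3
    exact (WithLp.toLp_injective 2 h3).symm
  refine ⟨fun k => e (x k), fun a b hab => ?_, fun t h1 h2 k => ?_⟩
  · replace hab : x a = x b := WithLp.toLp_injective 2 hab
    by_contra hne'
    have hval : (b - a).val ≠ 0 := by
      rw [Ne, ZMod.val_eq_zero, sub_eq_zero]
      exact Ne.symm hne'
    have hlt := (b - a).val_lt
    rcases Nat.lt_or_ge q (b - a).val with hgt | hle
    · refine hstep (p - (b - a).val) (by omega) (by omega) b ?_
      rw [Nat.cast_sub hlt.le, ZMod.natCast_self, ZMod.natCast_zmod_val]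
      simpa using hab.symm
    · refine hstep (b - a).val (by omega) hle a ?_
      rw [ZMod.natCast_zmod_val]
      simpa using hab
  · have := hx' t h1 h2 (k * t) 0
    rw [zero_add] at this
    simpa only [add_mul, one_mul] using this
end

section
/- Let p be an odd prime, let d and r be positive integers with d > r, and let ρ₁, ρ₂, …, ρᵣ be metrics on ℝᵈ each of which induces the standard (Euclidean) topology of ℝᵈ. Then there exists an r-equilateral p-gon in ℝᵈ with respect to ρ₁, …, ρᵣ: that is, there exist p distinct points x₀, x₁, …, x_{p−1} in ℝᵈ such that for each i = 1, …, r there is a constant cᵢ > 0 with ρᵢ(x_k, x_{k+1}) = cᵢ for all k = 0, 1, …, p−1 (indices mod p). -/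
namespace WordChain

open Finsupp

section Basic

variable {R : Type*} [CommRing R] {α β γ : Type*}

/-- Prepending a letter to every word of a chain. -/
noncomputable def cone (v : α) : (List α →₀ R) →ₗ[R] (List α →₀ R) :=
  Finsupp.lmapDomain R R (List.cons v)

/-- Applying a map to every letter of every word of a chain. -/
noncomputable def mapWord (f : α → β) : (List α →₀ R) →ₗ[R] (List β →₀ R) :=
  Finsupp.lmapDomain R R (List.map f)

/-- The alternating sum of the words obtained by deleting one letter. -/
noncomputable def bdWord : List α → (List α →₀ R)
  | [] => 0
  | v :: l => single l 1 - cone v (bdWord l)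

/-- The (augmented) simplicial boundary operator on chains of words. -/
noncomputable def bd : (List α →₀ R) →ₗ[R] (List α →₀ R) :=
  Finsupp.linearCombination R bdWord

@[simp] lemma cone_single (v : α) (l : List α) (c : R) :
    cone v (single l c) = single (v :: l) c := by
  simp [cone, Finsupp.mapDomain_single]

@[simp] lemma mapWord_single (f : α → β) (l : List α) (c : R) :
    mapWord f (single l c) = single (l.map f) c := by
  simp [mapWord, Finsupp.mapDomain_single]

lemma mapWord_mapWord (f : α → β) (g : β → γ) (x : List α →₀ R) :
    mapWord g (mapWord f x) = mapWord (g ∘ f) x := by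
  induction x using Finsupp.induction_linear with
  | zero => simp
  | add x y hx hy => simp [hx, hy]
  | single l c => simp

lemma mapWord_cone (f : α → β) (v : α) (x : List α →₀ R) :
    mapWord f (cone v x) = cone (f v) (mapWord f x) := by
  induction x using Finsupp.induction_linear with
  | zero => simp
  | add x y hx hy => simp [hx, hy]
  | single l c => simp

@[simp] lemma bd_single_nil (c : R) : bd (single ([] : List α) c) = 0 := by
  simp [bd, bdWord]

lemma bd_cone (v : α) (x : List α →₀ R) : bd (cone v x) = x - cone v (bd x) := by
  induction x using Finsupp.induction_linear with
  | zero => simp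
  | add x y hx hy => simp only [map_add, hx, hy]; abel
  | single l c => simp [bd, bdWord, smul_sub]

lemma bd_single_cons (v : α) (l : List α) (c : R) :
    bd (single (v :: l) c) = single l c - cone v (bd (single l c)) := by
  rw [← cone_single, bd_cone]

lemma bd_bd (x : List α →₀ R) : bd (bd x) = 0 := by
  induction x using Finsupp.induction_linear with
  | zero => simp
  | add x y hx hy => simp [hx, hy]
  | single l c =>
    induction l with
    | nil => simp
    | cons v l ih => rw [bd_single_cons, map_sub, bd_cone, ih]; simp

lemma bd_mapWord (f : α → β) (x : List α →₀ R) : bd (mapWord f x) = mapWord f (bd x) := by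
  induction x using Finsupp.induction_linear with
  | zero => simp
  | add x y hx hy => simp [hx, hy]
  | single l c =>
    induction l with
    | nil => simp
    | cons v l ih =>
      rw [mapWord_single] at ih ⊢
      rw [List.map_cons, bd_single_cons, bd_single_cons, map_sub, ih, mapWord_cone, mapWord_single]

/-- A linear map sends chains of words satisfying `P` to chains of words satisfying `Q` as soon
as it does so on single words. -/
lemma map_mem_supported {P : List α → Prop} {Q : List β → Prop}
    (f : (List α →₀ R) →ₗ[R] (List β →₀ R))
    (hf : ∀ w, P w → f (single w 1) ∈ supported R R {w | Q w})
    {x : List α →₀ R} (hx : x ∈ supported R R {w | P w}) :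
    f x ∈ supported R R {w | Q w} := by
  rw [supported_eq_span_single] at hx
  refine (Submodule.span_le (p := (supported R R {w | Q w}).comap f)).2 ?_ hx
  rintro _ ⟨w, hw, rfl⟩
  exact hf w hw

/-- Two linear maps that agree on the words satisfying `P` agree on chains of such words. -/
lemma eq_of_mem_supported {M : Type*} [AddCommGroup M] [Module R M] {P : List α → Prop}
    (f g : (List α →₀ R) →ₗ[R] M) (h : ∀ w, P w → f (single w 1) = g (single w 1))
    {x : List α →₀ R} (hx : x ∈ supported R R {w | P w}) : f x = g x := by
  rw [supported_eq_span_single] at hx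
  refine LinearMap.eqOn_span (s := (fun i => single i (1 : R)) '' {w | P w}) ?_ hx
  rintro _ ⟨w, hw, rfl⟩
  exact h w hw

lemma cone_mem_supported {P Q : List α → Prop} (v : α) (h : ∀ w, P w → Q (v :: w))
    {x : List α →₀ R} (hx : x ∈ supported R R {w | P w}) :
    cone v x ∈ supported R R {w | Q w} :=
  map_mem_supported _ (fun w hw => by
    rw [cone_single]; exact single_mem_supported R 1 (h w hw)) hx

lemma mapWord_mem_supported {P : List α → Prop} {Q : List β → Prop} (f : α → β)
    (h : ∀ w, P w → Q (w.map f)) {x : List α →₀ R} (hx : x ∈ supported R R {w | P w}) :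
    mapWord f x ∈ supported R R {w | Q w} :=
  map_mem_supported _ (fun w hw => by
    rw [mapWord_single]; exact single_mem_supported R 1 (h w hw)) hx

lemma supported_weaken {P Q : List α → Prop} (h : ∀ w, P w → Q w)
    {x : List α →₀ R} (hx : x ∈ supported R R {w | P w}) : x ∈ supported R R {w | Q w} :=
  supported_mono (fun w hw => h w hw) hx

lemma bd_single_mem_supported (l : List α) (c : R) :
    bd (single l c) ∈ supported R R {w | w.Sublist l ∧ w.length + 1 = l.length} := by
  induction l with
  | nil => simp
  | cons v l ih =>
    rw [bd_single_cons]
    refine Submodule.sub_mem _ (single_mem_supported R c (by simp)) ?_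
    exact cone_mem_supported v (fun w hw => ⟨hw.1.cons_cons v, by simp [← hw.2]⟩) ih

end Basic

section Subdivision

variable {R : Type*} [CommRing R] {α β : Type*}

/-- Barycentric subdivision of words of length at most `n`. -/
noncomputable def sdAux : ℕ → ((List α →₀ R) →ₗ[R] (List (List α) →₀ R))
  | 0 => Finsupp.linearCombination R fun _ => single [] 1
  | n + 1 => Finsupp.linearCombination R fun l => cone l (sdAux n (bd (single l 1)))

/-- Barycentric subdivision: a word is sent to the signed sum of its full flags of faces. -/
noncomputable def sd : (List α →₀ R) →ₗ[R] (List (List α) →₀ R) :=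
  Finsupp.linearCombination R fun l => sdAux l.length (single l 1)

@[simp] lemma sd_single_nil (c : R) : sd (single ([] : List α) c) = single [] c := by
  simp [sd, sdAux]

lemma sd_single_cons (v : α) (l : List α) :
    sd (single (v :: l) (1 : R)) = cone (v :: l) (sd (bd (single (v :: l) 1))) := by
  have h : sdAux l.length (bd (single (v :: l) (1 : R))) = sd (bd (single (v :: l) 1)) := by
    refine eq_of_mem_supported _ _ ?_ (bd_single_mem_supported (v :: l) 1)
    rintro w ⟨-, hw⟩
    have hw' : w.length = l.length := by simpa using hw
    simp [sd, hw']
  rw [← h]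
  simp [sd, sdAux]

lemma bd_sd (x : List α →₀ R) : bd (sd x) = sd (bd x) := by
  suffices h : ∀ n, ∀ l : List α, l.length = n →
      bd (sd (single l (1 : R))) = sd (bd (single l 1)) by
    exact eq_of_mem_supported (R := R) (P := fun _ => True) (bd ∘ₗ sd) (sd ∘ₗ bd)
      (fun w _ => h _ w rfl) (by simp)
  intro n
  induction n with
  | zero =>
    intro l hl
    obtain rfl := List.length_eq_zero_iff.1 hl
    simp
  | succ n ih =>
    intro l hl
    obtain ⟨v, l, rfl⟩ := List.exists_cons_of_length_eq_add_one hl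
    rw [sd_single_cons, bd_cone, sub_eq_self]
    have : bd (sd (bd (single (v :: l) (1 : R)))) = sd (bd (bd (single (v :: l) 1))) := by
      refine eq_of_mem_supported (R := R) (bd ∘ₗ sd) (sd ∘ₗ bd) ?_
        (bd_single_mem_supported (v :: l) 1)
      rintro w ⟨-, hw⟩
      exact ih w (by simpa [hl] using hw)
    rw [this, bd_bd]
    simp

lemma sd_mapWord (f : α → β) (x : List α →₀ R) :
    sd (mapWord f x) = mapWord (List.map f) (sd x) := by
  suffices h : ∀ n, ∀ l : List α, l.length = n →
      sd (mapWord f (single l (1 : R))) = mapWord (List.map f) (sd (single l 1)) by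
    exact eq_of_mem_supported (R := R) (P := fun _ => True) (sd ∘ₗ mapWord f)
      (mapWord (List.map f) ∘ₗ sd) (fun w _ => h _ w rfl) (by simp)
  intro n
  induction n with
  | zero =>
    intro l hl
    obtain rfl := List.length_eq_zero_iff.1 hl
    simp
  | succ n ih =>
    intro l hl
    obtain ⟨v, l, rfl⟩ := List.exists_cons_of_length_eq_add_one hl
    have : sd (mapWord f (bd (single (v :: l) (1 : R)))) =
        mapWord (List.map f) (sd (bd (single (v :: l) 1))) := by
      refine eq_of_mem_supported (R := R) (sd ∘ₗ mapWord f) (mapWord (List.map f) ∘ₗ sd) ?_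
        (bd_single_mem_supported (v :: l) 1)
      rintro w ⟨-, hw⟩
      exact ih w (by simpa [hl] using hw)
    rw [sd_single_cons, mapWord_cone, ← this, ← bd_mapWord, mapWord_single, List.map_cons,
      sd_single_cons]

/-- `w` is a full descending flag of nonempty subwords of `l`. -/
def IsFlag (l : List α) (w : List (List α)) : Prop :=
  w.length = l.length ∧ (∀ m ∈ w, m.Sublist l ∧ m ≠ []) ∧ w.Pairwise fun a b => b.Sublist a

lemma sd_single_mem_supported (l : List α) :
    sd (single l (1 : R)) ∈ supported R R {w | IsFlag l w} := by
  suffices h : ∀ n, ∀ l : List α, l.length = n →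
      sd (single l (1 : R)) ∈ supported R R {w | IsFlag l w} from h _ l rfl
  intro n
  induction n with
  | zero =>
    intro l hl
    obtain rfl := List.length_eq_zero_iff.1 hl
    rw [sd_single_nil]
    exact single_mem_supported R 1 ⟨rfl, by simp, by simp⟩
  | succ n ih =>
    intro l hl
    obtain ⟨v, l, rfl⟩ := List.exists_cons_of_length_eq_add_one hl
    rw [sd_single_cons]
    have := map_mem_supported (R := R) (sd (α := α))
      (Q := fun w => w.length + 1 = (v :: l).length ∧
        (∀ m ∈ w, m.Sublist (v :: l) ∧ m ≠ []) ∧ w.Pairwise fun a b => b.Sublist a)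
      ?_ (bd_single_mem_supported (v :: l) 1)
    · refine cone_mem_supported _ ?_ this
      rintro w ⟨h1, h2, h3⟩
      refine ⟨by simpa using h1, ?_, ?_⟩
      · simp only [List.mem_cons, forall_eq_or_imp]
        exact ⟨by simp, h2⟩
      · exact List.pairwise_cons.2 ⟨fun m hm => (h2 m hm).1, h3⟩
    · rintro w ⟨hw1, hw2⟩
      refine supported_weaken ?_ (ih w (by simpa [hl] using hw2))
      rintro u ⟨h1, h2, h3⟩
      exact ⟨by rw [h1, hw2], fun m hm => ⟨(h2 m hm).1.trans hw1, (h2 m hm).2⟩, h3⟩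

end Subdivision

section Cyclic

variable {R : Type*} [CommRing R] {M M' : Type*} [AddCommGroup M] [Module R M]
  [AddCommGroup M'] [Module R M']

/-- The alternating elements `∑ Tᵗ` and `T - 1` of the group ring of a cyclic group of order `p`
with generator `T`. -/
noncomputable def cyc (p k : ℕ) (T : Module.End R M) : Module.End R M :=
  if Odd k then ∑ t ∈ Finset.range p, T ^ t else T - 1

lemma cyc_succ_mul_cyc {p : ℕ} {T : Module.End R M} (hT : T ^ p = 1) (k : ℕ) :
    cyc p (k + 1) T * cyc p k T = 0 := by
  unfold cyc
  rcases Nat.even_or_odd k with h | h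
  · rw [if_pos h.add_one, if_neg (Nat.not_odd_iff_even.2 h), geom_sum_mul, hT, sub_self]
  · rw [if_neg (Nat.not_odd_iff_even.2 h.add_one), if_pos h, mul_geom_sum, hT, sub_self]

lemma pow_mem_of_mem {T : Module.End R M} {S : Submodule R M} (h : ∀ x ∈ S, T x ∈ S) {x : M}
    (hx : x ∈ S) (t : ℕ) : (T ^ t) x ∈ S := by
  induction t with
  | zero => simpa
  | succ t ih => rw [pow_succ', Module.End.mul_apply]; exact h _ ih

lemma cyc_mem {p k : ℕ} {T : Module.End R M} {S : Submodule R M} (h : ∀ x ∈ S, T x ∈ S) {x : M}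
    (hx : x ∈ S) : cyc p k T x ∈ S := by
  unfold cyc
  split_ifs
  · rw [LinearMap.sum_apply]
    exact Submodule.sum_mem _ fun t _ => pow_mem_of_mem h hx t
  · exact S.sub_mem (h x hx) hx

lemma map_pow_of_mem {f : M →ₗ[R] M'} {T : Module.End R M} {T' : Module.End R M'}
    {S : Submodule R M} (hS : ∀ x ∈ S, T x ∈ S) (h : ∀ x ∈ S, f (T x) = T' (f x)) (t : ℕ) {x : M}
    (hx : x ∈ S) : f ((T ^ t) x) = (T' ^ t) (f x) := by
  induction t with
  | zero => simp
  | succ t ih =>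
    rw [pow_succ', pow_succ', Module.End.mul_apply, Module.End.mul_apply,
      h _ (pow_mem_of_mem hS hx t), ih]

lemma map_cyc_of_mem {f : M →ₗ[R] M'} {T : Module.End R M} {T' : Module.End R M'}
    {S : Submodule R M} (hS : ∀ x ∈ S, T x ∈ S) (h : ∀ x ∈ S, f (T x) = T' (f x)) (p k : ℕ) {x : M}
    (hx : x ∈ S) : f (cyc p k T x) = cyc p k T' (f x) := by
  unfold cyc
  split_ifs
  · simp [LinearMap.sum_apply, map_pow_of_mem hS h _ hx]
  · simp [h x hx]

lemma map_pow_apply {f : M →ₗ[R] M'} {T : Module.End R M} {T' : Module.End R M'}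
    (h : ∀ x, f (T x) = T' (f x)) (t : ℕ) (x : M) : f ((T ^ t) x) = (T' ^ t) (f x) :=
  map_pow_of_mem (S := ⊤) (by simp) (fun x _ => h x) t trivial

lemma map_cyc {f : M →ₗ[R] M'} {T : Module.End R M} {T' : Module.End R M'}
    (h : ∀ x, f (T x) = T' (f x)) (p k : ℕ) (x : M) :
    f (cyc p k T x) = cyc p k T' (f x) :=
  map_cyc_of_mem (S := ⊤) (by simp) (fun x _ => h x) p k trivial

end Cyclic

section Cochain

variable {p : ℕ} [NeZero p] {R : Type*} [CommRing R]

/-- The generator of the cyclic group acting on chains of words with letters in `ZMod p`. -/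
noncomputable def rot (p : ℕ) (R : Type*) [CommRing R] : Module.End R (List (ZMod p) →₀ R) :=
  mapWord (· + 1)

omit [NeZero p] in
lemma rot_pow_single (t : ℕ) (w : List (ZMod p)) (c : R) :
    (rot p R ^ t) (single w c) = single (w.map (· + (t : ZMod p))) c := by
  induction t with
  | zero => simp
  | succ t ih =>
    rw [pow_succ', Module.End.mul_apply, ih, rot, mapWord_single, List.map_map]
    congr 2
    funext a
    simp [add_assoc]

omit [NeZero p] in
lemma isChain_ne_map_add (w : List (ZMod p)) (c : ZMod p) :
    (w.map (· + c)).IsChain (· ≠ ·) ↔ w.IsChain (· ≠ ·) := by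
  rw [List.isChain_map]
  simp

/-- A functional annihilating the empty word and the words with two equal consecutive letters. -/
def IsNormalized {α : Type*} (f : (List α →₀ R) →ₗ[R] R) : Prop :=
  f (single [] 1) = 0 ∧ ∀ w : List α, ¬ w.IsChain (· ≠ ·) → f (single w 1) = 0

/-- The rotation acts freely on nonempty words, so a normalized functional annihilating the image
of one of `∑ Tᵗ`, `T - 1` factors through the other one. -/
lemma exists_lift (k : ℕ) (f : (List (ZMod p) →₀ R) →ₗ[R] R) (hf : IsNormalized f)
    (hk : ∀ x, f (cyc p k (rot p R) x) = 0) :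
    ∃ u : (List (ZMod p) →₀ R) →ₗ[R] R, IsNormalized u ∧
      ∀ x, u (cyc p (k + 1) (rot p R) x) = f x := by
  have hp0 : 0 < p := NeZero.pos p
  rcases Nat.even_or_odd k with h | h
  · have hinv : ∀ (t : ℕ) (w : List (ZMod p)),
        f (single (w.map (· + (t : ZMod p))) 1) = f (single w 1) := by
      intro t w
      rw [← rot_pow_single]
      have h1 : ∀ x, f (rot p R x) = LinearMap.id (R := R) (f x) := by
        intro x
        have := hk x
        rw [cyc, if_neg (Nat.not_odd_iff_even.2 h)] at this
        simpa [sub_eq_zero] using this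
      have := map_pow_apply (T' := LinearMap.id) h1 t (single w 1)
      rw [this]
      have h2 : (LinearMap.id : R →ₗ[R] R) ^ t = 1 := one_pow t
      rw [h2, Module.End.one_apply]
    refine ⟨Finsupp.linearCombination R fun w =>
      if w.head? = some 0 then f (single w 1) else 0, ⟨by simp, ?_⟩, ?_⟩
    · intro w hw
      simp [hf.2 w hw]
    · intro x
      rw [← LinearMap.comp_apply]
      refine eq_of_mem_supported (R := R) (P := fun _ => True) _ f ?_ (by simp) (x := x)
      rintro w -
      rw [LinearMap.comp_apply, cyc, if_pos h.add_one]
      simp only [LinearMap.sum_apply, rot_pow_single, map_sum, linearCombination_single, one_smul,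
        hinv]
      cases w with
      | nil => simp [hf.1]
      | cons a l =>
        rw [Finset.sum_eq_single (-a).val]
        · simp
        · intro t ht hta
          rw [if_neg]
          simp only [List.map_cons, List.head?_cons, Option.some.injEq]
          intro h0
          apply hta
          rw [neg_eq_of_add_eq_zero_right h0, ZMod.val_cast_of_lt (Finset.mem_range.1 ht)]
        · intro h0
          exact absurd (Finset.mem_range.2 (ZMod.val_lt _)) h0
  · have hsum : ∀ w : List (ZMod p),
        ∑ t ∈ Finset.range p, f (single (w.map (· + (t : ZMod p))) 1) = 0 := by
      intro w
      have := hk (single w 1)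
      rw [cyc, if_pos h] at this
      simpa [LinearMap.sum_apply, rot_pow_single] using this
    refine ⟨Finsupp.linearCombination R fun w => ∑ t ∈ Finset.range (w.headI).val,
      f (single (w.map (· + ((t : ZMod p) - w.headI))) 1), ⟨?_, ?_⟩, ?_⟩
    · simp [hf.1]
    · intro w hw
      rw [linearCombination_single, one_smul]
      refine Finset.sum_eq_zero fun t _ => hf.2 _ ?_
      rwa [isChain_ne_map_add]
    · intro x
      rw [← LinearMap.comp_apply]
      refine eq_of_mem_supported (R := R) (P := fun _ => True) _ f ?_ (by simp) (x := x)
      rintro w -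
      have hev : ¬ Odd (k + 1) := Nat.not_odd_iff_even.2 h.add_one
      rw [LinearMap.comp_apply, cyc, if_neg hev]
      cases w with
      | nil => simp [hf.1, rot]
      | cons a l =>
        set F : ℕ → R := fun t => f (single ((a :: l).map (· + ((t : ZMod p) - a))) 1) with hF
        have hFa : F a.val = f (single (a :: l) 1) := by simp [hF]
        have hF0 : ∑ t ∈ Finset.range p, F t = 0 := by
          rw [← hsum ((a :: l).map (· + -a))]
          refine Finset.sum_congr rfl fun t _ => ?_
          rw [List.map_map]
          refine congrArg (fun g => f (single ((a :: l).map g) 1)) ?_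
          funext b
          simp only [Function.comp_apply]
          ring
        rw [LinearMap.sub_apply, rot, mapWord_single, map_sub, Module.End.one_apply,
          linearCombination_single, linearCombination_single, one_smul, one_smul]
        have h1 : ∑ t ∈ Finset.range (((a :: l).map (· + 1)).headI).val,
            f (single (((a :: l).map (· + 1)).map
              (· + ((t : ZMod p) - ((a :: l).map (· + 1)).headI))) 1) =
            ∑ t ∈ Finset.range (a + 1).val, F t := by
          refine Finset.sum_congr rfl fun t _ => ?_
          rw [hF, List.map_map]
          congr 3
          funext b
          simp only [Function.comp_apply, List.map_cons, List.headI_cons]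
          ring
        rw [h1]
        change _ - ∑ t ∈ Finset.range a.val, F t = _
        rw [← hFa]
        have ha : ((a.val : ℕ) : ZMod p) = a := ZMod.natCast_zmod_val a
        have ha1 : a + 1 = ((a.val + 1 : ℕ) : ZMod p) := by simp
        rcases (Nat.succ_le_of_lt (ZMod.val_lt a)).lt_or_eq with hlt | heq
        · rw [ha1, ZMod.val_cast_of_lt hlt, Finset.sum_range_succ]
          ring
        · have heq' : a.val + 1 = p := heq
          have : (a + 1).val = 0 := by
            rw [ha1, heq']; simp
          rw [this, Finset.sum_range_zero]
          rw [← heq', Finset.sum_range_succ] at hF0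
          linear_combination -hF0

/-- If `c 0, …, c N` are chains of words with letters in `ZMod p` starting with a single letter
and such that the boundary of `c (k + 1)` is the image of `c k` under the `(k + 1)`-st alternating
element, then some word of `c N` has no two equal consecutive letters. -/
lemma not_all_degenerate [Nontrivial R] (N : ℕ) (c : ℕ → (List (ZMod p) →₀ R)) (a : ZMod p)
    (h0 : c 0 = single [a] 1) (hc : ∀ k < N, bd (c (k + 1)) = cyc p (k + 1) (rot p R) (c k))
    (hN : c N ∈ supported R R {w | ¬ w.IsChain (· ≠ ·)}) : False := by
  have hcomm : ∀ x, bd (rot p R x) = rot p R (bd x) := bd_mapWord _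
  suffices h : ∀ k ≤ N, ∃ u : (List (ZMod p) →₀ R) →ₗ[R] R, IsNormalized u ∧
      (∀ x, u (cyc p (k + 1) (rot p R) (bd x)) = 0) ∧ u (cyc p (k + 1) (rot p R) (c k)) = 1 by
    obtain ⟨u, hu, -, hu1⟩ := h N le_rfl
    have : u (cyc p (N + 1) (rot p R) (c N)) = 0 := by
      refine eq_of_mem_supported (u ∘ₗ cyc p (N + 1) (rot p R)) 0 ?_ hN
      intro w hw
      have : cyc p (N + 1) (rot p R) (single w 1) ∈
          supported R R {w : List (ZMod p) | ¬ w.IsChain (· ≠ ·)} := by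
        refine cyc_mem ?_ (single_mem_supported R 1 hw)
        intro x hx
        refine mapWord_mem_supported _ ?_ hx
        intro w hw
        rwa [isChain_ne_map_add]
      simpa using eq_of_mem_supported u 0 (fun w hw => by simpa using hu.2 w hw) this
    exact one_ne_zero (hu1.symm.trans this)
  intro k
  induction k with
  | zero =>
    intro _
    set f : (List (ZMod p) →₀ R) →ₗ[R] R :=
      Finsupp.linearCombination R fun w => if w.length = 1 then 1 else 0 with hf
    have hfn : IsNormalized f := by
      refine ⟨by simp [hf], fun w hw => ?_⟩
      have : w.length ≠ 1 := by
        intro h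
        obtain ⟨b, rfl⟩ := List.length_eq_one_iff.1 h
        simp at hw
      simp [hf, this]
    have hf0 : ∀ x, f (cyc p 0 (rot p R) x) = 0 := by
      intro x
      refine eq_of_mem_supported (R := R) (P := fun _ => True) (f ∘ₗ cyc p 0 (rot p R)) 0 ?_
        (by simp) (x := x)
      rintro w -
      simp [cyc, hf, rot]
    obtain ⟨u, hu, hu1⟩ := exists_lift 0 f hfn hf0
    refine ⟨u, hu, ?_, ?_⟩
    · intro x
      rw [hu1]
      refine eq_of_mem_supported (R := R) (P := fun _ => True) (f ∘ₗ bd) 0 ?_ (by simp) (x := x)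
      rintro w -
      match w with
      | [] => simp
      | [a] => simp [bd_single_cons, hf]
      | [a, b] => simp [bd_single_cons, hf]
      | a :: b :: d :: l =>
        refine eq_of_mem_supported f 0 ?_ (bd_single_mem_supported (a :: b :: d :: l) 1)
        rintro w ⟨-, hw⟩
        have : w.length ≠ 1 := by
          simp only [List.length_cons] at hw
          omega
        simp [hf, this]
    · rw [hu1, h0]
      simp [hf]
  | succ k ih =>
    intro hk
    obtain ⟨u, hu, hu0, hu1⟩ := ih (by omega)
    have hn : IsNormalized (u ∘ₗ bd) := by
      refine ⟨by simp, ?_⟩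
      intro w hw
      rw [LinearMap.comp_apply]
      clear hk hu0 hu1 hN hc h0
      suffices hdeg : bd (single w (1 : R)) ∈
          supported R R {w : List (ZMod p) | ¬ w.IsChain (· ≠ ·)} by
        simpa using eq_of_mem_supported u 0 (fun w hw => by simpa using hu.2 w hw) hdeg
      induction w with
      | nil => simp at hw
      | cons b l ih =>
        cases l with
        | nil => simp at hw
        | cons b' l =>
          rw [List.isChain_cons_cons, not_and_or, not_not] at hw
          by_cases hl : (b' :: l).IsChain (· ≠ ·)
          · obtain rfl : b = b' := hw.resolve_right (not_not.2 hl)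
            rw [bd_single_cons, bd_single_cons, map_sub, cone_single, sub_sub_cancel]
            refine cone_mem_supported (P := fun w => ∃ w', w = b :: w') b ?_ ?_
            · rintro _ ⟨w', rfl⟩
              simp
            · exact cone_mem_supported (P := fun _ => True) b (fun w _ => ⟨w, rfl⟩) (by simp)
          · rw [bd_single_cons]
            refine Submodule.sub_mem _ (single_mem_supported R 1 hl) ?_
            refine cone_mem_supported b ?_ (ih hl)
            intro w hw hc
            exact hw hc.tail
    have hz : ∀ x, (u ∘ₗ bd) (cyc p (k + 1) (rot p R) x) = 0 := by
      intro x
      rw [LinearMap.comp_apply, map_cyc hcomm, hu0]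
    obtain ⟨u', hu', hu1'⟩ := exists_lift (k + 1) (u ∘ₗ bd) hn hz
    refine ⟨u', hu', ?_, ?_⟩
    · intro x
      rw [hu1', LinearMap.comp_apply, bd_bd, map_zero]
    · rw [hu1', LinearMap.comp_apply, hc k (by omega), hu1]

end Cochain

section Geometry

variable {V : Type*} [NormedAddCommGroup V] [NormedSpace ℝ V]

/-- The barycenter of a list of points. -/
noncomputable def bary (l : List V) : V := (l.length : ℝ)⁻¹ • l.sum

lemma bary_map (g : V →ₗ[ℝ] V) (l : List V) : bary (l.map g) = g (bary l) := by
  simp [bary, map_list_sum]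

lemma bary_mem {S : Set V} (hS : Convex ℝ S) {l : List V} (hl : l ≠ []) (h : ∀ x ∈ l, x ∈ S) :
    bary l ∈ S := by
  have hpos : 0 < l.length := List.length_pos_iff.2 hl
  have : bary l = ∑ i : Fin l.length, (l.length : ℝ)⁻¹ • l[i] := by
    rw [bary, ← Finset.smul_sum]
    exact congrArg _ (Fin.sum_univ_getElem l).symm
  rw [this]
  refine hS.sum_mem (fun _ _ => by positivity) ?_ fun i _ => h _ (by simp)
  have : (l.length : ℝ) ≠ 0 := by positivity
  simp [this]

omit [NormedSpace ℝ V] in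
lemma norm_sum_le_of_forall_le {l : List V} {D : ℝ} (h : ∀ x ∈ l, ‖x‖ ≤ D) :
    ‖l.sum‖ ≤ l.length * D := by
  induction l with
  | nil => simp
  | cons a l ih =>
    simp only [List.mem_cons, forall_eq_or_imp] at h
    rw [List.sum_cons, List.length_cons]
    push_cast
    linarith [norm_add_le a l.sum, h.1, ih h.2]

lemma sum_map_sub_right (l : List V) (v : V) :
    (l.map (· - v)).sum = l.sum - (l.length : ℝ) • v := by
  induction l with
  | nil => simp
  | cons a l ih =>
    rw [List.map_cons, List.sum_cons, ih, List.sum_cons, List.length_cons]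
    push_cast
    module

lemma dist_bary_le {l : List V} {D : ℝ} (hD : ∀ x ∈ l, ∀ y ∈ l, dist x y ≤ D) {v : V}
    (hv : v ∈ l) : dist (bary l) v ≤ (1 - (l.length : ℝ)⁻¹) * D := by
  classical
  have hperm := List.perm_cons_erase hv
  set l' := l.erase v with hl'
  have hlen : (l.length : ℝ) = l'.length + 1 := by
    rw [hperm.length_eq]; simp
  have hpos : (0 : ℝ) < l.length := by rw [hlen]; positivity
  have hsum : bary l - v = (l.length : ℝ)⁻¹ • (l'.map (· - v)).sum := by
    rw [bary, sum_map_sub_right, hperm.sum_eq, List.sum_cons]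
    have : v = (l.length : ℝ)⁻¹ • (l.length : ℝ) • v := by
      rw [smul_smul, inv_mul_cancel₀ hpos.ne', one_smul]
    nth_rewrite 2 [this]
    rw [← smul_sub, hlen]
    congr 1
    module
  have hb : ‖(l'.map (· - v)).sum‖ ≤ (l'.map (· - v)).length * D := by
    refine norm_sum_le_of_forall_le ?_
    intro x hx
    obtain ⟨y, hy, rfl⟩ := List.mem_map.1 hx
    rw [← dist_eq_norm]
    exact hD y (List.mem_of_mem_erase hy) v hv
  rw [List.length_map] at hb
  rw [dist_eq_norm, hsum, norm_smul, Real.norm_of_nonneg (by positivity)]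
  calc (l.length : ℝ)⁻¹ * ‖(l'.map (· - v)).sum‖ ≤ (l.length : ℝ)⁻¹ * (l'.length * D) := by gcongr
    _ = (1 - (l.length : ℝ)⁻¹) * D := by
      have : (l'.length : ℝ) = l.length - 1 := by rw [hlen]; ring
      rw [this]
      field_simp

/-- A list of `n` points of diameter at most `D` lying in a convex subset of `K`. -/
def IsFine (n : ℕ) (D : ℝ) (K : Set V) (l : List V) : Prop :=
  l.length = n ∧ (∀ x ∈ l, ∀ y ∈ l, dist x y ≤ D) ∧ ∃ S ⊆ K, Convex ℝ S ∧ ∀ x ∈ l, x ∈ S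

lemma IsFine.map_bary {n : ℕ} {D : ℝ} (hD : 0 ≤ D) {K : Set V} {l : List V} (hl : IsFine n D K l)
    {w : List (List V)} (hw : IsFlag l w) :
    IsFine n ((1 - (n : ℝ)⁻¹) * D) K (w.map bary) := by
  obtain ⟨rfl, hlD, S, hSK, hS, hlS⟩ := hl
  obtain ⟨hw1, hw2, hw3⟩ := hw
  refine ⟨by simpa using hw1, ?_, S, hSK, hS, ?_⟩
  · have hsymm : Std.Symm fun a b : List V =>
        dist (bary a) (bary b) ≤ (1 - (l.length : ℝ)⁻¹) * D :=
      ⟨fun a b h => by rwa [dist_comm]⟩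
    have key : ∀ a ∈ w, ∀ b ∈ w, dist (bary a) (bary b) ≤ (1 - (l.length : ℝ)⁻¹) * D := by
      refine List.Pairwise.forall_of_forall (R := fun a b : List V =>
        dist (bary a) (bary b) ≤ (1 - (l.length : ℝ)⁻¹) * D) ?_ ?_
      · intro a ha
        have h1 : (1 : ℝ) ≤ l.length := by
          have := (List.length_pos_iff.2 (hw2 a ha).2).trans_le (hw2 a ha).1.length_le
          exact_mod_cast this
        have h2 := inv_le_one_of_one_le₀ h1
        rw [dist_self]
        exact mul_nonneg (by linarith) hD
      · refine List.Pairwise.imp_of_mem ?_ hw3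
        intro a b ha hb hba
        have hal := hw2 a ha
        have hbl := hw2 b hb
        have hpos : (0 : ℝ) < a.length := by exact_mod_cast List.length_pos_iff.2 hal.2
        have hle : (a.length : ℝ) ≤ l.length := by exact_mod_cast hal.1.length_le
        have haD : (1 - (a.length : ℝ)⁻¹) * D ≤ (1 - (l.length : ℝ)⁻¹) * D := by gcongr
        refine le_trans ?_ haD
        rw [dist_comm]
        have := bary_mem (convex_closedBall (bary a) ((1 - (a.length : ℝ)⁻¹) * D)) hbl.2
          (fun x hx => ?_)
        · exact this
        · rw [Metric.mem_closedBall, dist_comm]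
          exact dist_bary_le (fun x hx y hy => hlD x (hal.1.subset hx) y (hal.1.subset hy))
            (hba.subset hx)
    intro x hx y hy
    obtain ⟨a, ha, rfl⟩ := List.mem_map.1 hx
    obtain ⟨b, hb, rfl⟩ := List.mem_map.1 hy
    exact key a ha b hb
  · intro x hx
    obtain ⟨a, ha, rfl⟩ := List.mem_map.1 hx
    exact bary_mem hS (hw2 a ha).2 fun y hy => hlS y ((hw2 a ha).1.subset hy)

variable {R : Type*} [CommRing R]

/-- Geometric barycentric subdivision of chains of words of points. -/
noncomputable def sdGeom : Module.End R (List V →₀ R) := mapWord bary ∘ₗ sd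

lemma bd_sdGeom (x : List V →₀ R) : bd (sdGeom x) = sdGeom (bd x) := by
  simp [sdGeom, bd_mapWord, bd_sd]

lemma sdGeom_mapWord (g : V →ₗ[ℝ] V) (x : List V →₀ R) :
    sdGeom (mapWord g x) = mapWord g (sdGeom x) := by
  simp only [sdGeom, LinearMap.comp_apply, sd_mapWord, mapWord_mapWord]
  congr 2
  funext l
  exact bary_map g l

lemma sdGeom_mem_supported {n : ℕ} {D : ℝ} (hD : 0 ≤ D) {K : Set V} {x : List V →₀ R}
    (hx : x ∈ supported R R {l | IsFine n D K l}) :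
    sdGeom x ∈ supported R R {l | IsFine n ((1 - (n : ℝ)⁻¹) * D) K l} :=
  map_mem_supported sdGeom (fun l hl => mapWord_mem_supported (P := IsFlag l) bary
    (fun _ hw => IsFine.map_bary hD hl hw) (sd_single_mem_supported l)) hx

lemma mapWord_pow {α : Type*} (g : α → α) (t : ℕ) :
    (mapWord g : Module.End R (List α →₀ R)) ^ t = mapWord g^[t] := by
  induction t with
  | zero =>
    ext1 l
    ext1
    simp
  | succ t ih =>
    ext1 l
    ext1
    simp [pow_succ, ih]

/-- The standard chains of the iterated join of orbits of the points `v 0, v 1, …`. -/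
noncomputable def joinChain {α : Type*} (R : Type*) [CommRing R] (p : ℕ) (g : α → α) (v : ℕ → α) :
    ℕ → (List α →₀ R)
  | 0 => single [v 0] 1
  | k + 1 => cone (v (k + 1)) (cyc p (k + 1) (mapWord g) (joinChain R p g v k))

lemma bd_joinChain {α : Type*} {p : ℕ} [CharP R p] {g : α → α} (hg : g^[p] = id) (v : ℕ → α)
    (k : ℕ) : bd (joinChain R p g v (k + 1)) =
      cyc p (k + 1) (mapWord g) (joinChain R p g v k) := by
  have hT : (mapWord g : Module.End R (List α →₀ R)) ^ p = 1 := by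
    rw [mapWord_pow, hg]
    ext1 l
    ext1
    simp
  rw [joinChain, bd_cone, sub_eq_self]
  suffices h : bd (cyc p (k + 1) (mapWord g) (joinChain R p g v k)) = 0 by rw [h, map_zero]
  rw [map_cyc (bd_mapWord g)]
  induction k with
  | zero =>
    have h1 : ∀ t : ℕ, (mapWord g ^ t : Module.End R (List α →₀ R)) (single [] 1) =
        single [] 1 := by
      intro t
      rw [mapWord_pow, mapWord_single, List.map_nil]
    simp [joinChain, bd_single_cons, cyc, LinearMap.sum_apply, h1]
  | succ k ih =>
    rw [joinChain, bd_cone, map_cyc (bd_mapWord g), ih, map_zero, sub_zero,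
      ← Module.End.mul_apply, cyc_succ_mul_cyc hT, LinearMap.zero_apply]

lemma joinChain_mem_supported {α : Type*} (p : ℕ) (g : α → α) (v : ℕ → α) (k : ℕ) :
    joinChain R p g v k ∈ supported R R {w | w.length = k + 1 ∧
      ∃ a : ℕ → ℕ, ∀ x ∈ w, ∃ j ≤ k, x = g^[a j] (v j)} := by
  induction k with
  | zero => exact single_mem_supported R 1 ⟨rfl, fun _ => 0, by simp⟩
  | succ k ih =>
    rw [joinChain]
    have := cyc_mem (p := p) (k := k + 1) (T := (mapWord g : Module.End R _)) ?_ ih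
    · refine cone_mem_supported _ ?_ this
      rintro w ⟨hw, a, ha⟩
      refine ⟨by simp [hw], fun j => if j ≤ k then a j else 0, ?_⟩
      simp only [List.mem_cons, forall_eq_or_imp]
      refine ⟨⟨k + 1, le_rfl, by simp⟩, fun x hx => ?_⟩
      obtain ⟨j, hj, hx'⟩ := ha x hx
      exact ⟨j, by omega, by rw [if_pos hj, hx']⟩
    · intro x hx
      refine mapWord_mem_supported g ?_ hx
      rintro w ⟨hw, a, ha⟩
      refine ⟨by simpa using hw, fun j => a j + 1, ?_⟩
      intro x hx
      obtain ⟨y, hy, rfl⟩ := List.mem_map.1 hx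
      obtain ⟨j, hj, rfl⟩ := ha y hy
      exact ⟨j, hj, by rw [Function.iterate_succ_apply']⟩

/-- A **Borsuk–Ulam–Dold type theorem** for a cyclic group of order `p` acting linearly, in terms
of labellings of small sets of points of the join of `N + 1` orbits. -/
theorem exists_flag_isChain_ne {p : ℕ} [Fact p.Prime] (g : V →ₗ[ℝ] V) (hg : g^[p] = id)
    (v : ℕ → V) (N : ℕ) (K : Set V)
    (hK : ∀ a : ℕ → ℕ, ∃ S ⊆ K, Convex ℝ S ∧ ∀ j ≤ N, g^[a j] (v j) ∈ S)
    (hgK : ∀ x ∈ K, g x ∈ K) (hgd : ∀ x y, dist (g x) (g y) = dist x y)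
    {B : ℝ} (hB : ∀ x ∈ K, ∀ y ∈ K, dist x y ≤ B) {δ : ℝ} (hδ : 0 < δ) (s : List V → ZMod p)
    (hs : ∀ l : List V, l ≠ [] → (∀ x ∈ l, x ∈ K) → (∀ x ∈ l, ∀ y ∈ l, dist x y < δ) →
      s (l.map g) = s l + 1) :
    ∃ w : List (List V), w.length = N + 1 ∧
      (∀ l ∈ w, l ≠ [] ∧ (∀ x ∈ l, x ∈ K) ∧ ∀ x ∈ l, ∀ y ∈ l, dist x y < δ) ∧
      w.Pairwise (fun a b => b.Sublist a) ∧ (w.map s).IsChain (· ≠ ·) := by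
  by_contra! hcon
  set q : ℝ := 1 - ((N + 1 : ℕ) : ℝ)⁻¹ with hq
  have hN1 : (1 : ℝ) ≤ ((N + 1 : ℕ) : ℝ) := by push_cast; linarith [(Nat.cast_nonneg N : (0:ℝ) ≤ N)]
  have hq0 : 0 ≤ q := by linarith [inv_le_one_of_one_le₀ hN1]
  have hq1 : q < 1 := by
    have : 0 < ((N + 1 : ℕ) : ℝ)⁻¹ := by positivity
    linarith
  have hB0 : 0 ≤ B := by
    obtain ⟨S, hSK, -, hS⟩ := hK 0
    have := hB _ (hSK (hS 0 N.zero_le)) _ (hSK (hS 0 N.zero_le))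
    rwa [dist_self] at this
  obtain ⟨m, hm⟩ : ∃ m : ℕ, q ^ m * B < δ := by
    have := (tendsto_pow_atTop_nhds_zero_of_lt_one hq0 hq1).mul_const B
    rw [zero_mul] at this
    exact (this.eventually_lt_const hδ).exists
  have hz : ∀ k ≤ N, ∀ m : ℕ, (sdGeom ^ m) (joinChain (ZMod p) p g v k) ∈
      supported (ZMod p) (ZMod p) {l | IsFine (k + 1) (q ^ m * B) K l} := by
    intro k hk m
    induction m with
    | zero =>
      refine supported_weaken ?_ (joinChain_mem_supported p g v k)
      rintro w ⟨hw, a, ha⟩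
      obtain ⟨S, hSK, hS, hSv⟩ := hK a
      have hwS : ∀ x ∈ w, x ∈ S := by
        intro x hx
        obtain ⟨j, hj, rfl⟩ := ha x hx
        exact hSv j (hj.trans hk)
      exact ⟨hw, fun x hx y hy => by simpa using hB x (hSK (hwS x hx)) y (hSK (hwS y hy)),
        S, hSK, hS, hwS⟩
    | succ m ih =>
      rw [pow_succ' sdGeom, Module.End.mul_apply]
      refine supported_weaken ?_ (sdGeom_mem_supported (by positivity) ih)
      rintro w ⟨h1, h2, h3⟩
      refine ⟨h1, fun x hx y hy => (h2 x hx y hy).trans ?_, h3⟩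
      rw [pow_succ' q, mul_assoc]
      have : ((k + 1 : ℕ) : ℝ) ≤ ((N + 1 : ℕ) : ℝ) := by exact_mod_cast Nat.succ_le_succ hk
      have hqk : 1 - ((k + 1 : ℕ) : ℝ)⁻¹ ≤ q := by
        rw [hq]
        gcongr
      gcongr
  have hfine : ∀ {k : ℕ} {l : List V}, IsFine k (q ^ m * B) K l → ∀ {l' : List V}, l'.Sublist l →
      (∀ x ∈ l', x ∈ K) ∧ ∀ x ∈ l', ∀ y ∈ l', dist x y < δ := by
    rintro k l ⟨-, h2, S, hSK, -, hS⟩ l' hl'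
    exact ⟨fun x hx => hSK (hS x (hl'.subset hx)),
      fun x hx y hy => (h2 x (hl'.subset hx) y (hl'.subset hy)).trans_lt hm⟩
  set c : ℕ → (List (ZMod p) →₀ ZMod p) := fun k =>
    mapWord s (sd ((sdGeom ^ m) (joinChain (ZMod p) p g v k))) with hc
  refine not_all_degenerate N c (s [v 0]) ?_ ?_ ?_
  · have h1 : ∀ m : ℕ, (sdGeom ^ m : Module.End (ZMod p) _) (single [v 0] 1) = single [v 0] 1 := by
      intro m
      induction m with
      | zero => simp
      | succ m ih =>
        rw [pow_succ', Module.End.mul_apply, ih]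
        simp [sdGeom, sd_single_cons, bd_single_cons, bary]
    simp [hc, joinChain, h1, sd_single_cons, bd_single_cons]
  · intro k hk
    set S : Submodule (ZMod p) (List V →₀ ZMod p) := supported (ZMod p) (ZMod p)
      {l | (∀ x ∈ l, x ∈ K) ∧ ∀ x ∈ l, ∀ y ∈ l, dist x y < δ} with hS
    have hST : ∀ x ∈ S, mapWord g x ∈ S := by
      intro x hx
      refine mapWord_mem_supported g ?_ hx
      rintro l ⟨h1, h2⟩
      simp only [List.forall_mem_map, hgd]
      exact ⟨fun x hx => hgK x (h1 x hx), h2⟩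
    have hsT : ∀ x ∈ S, (mapWord s ∘ₗ sd) (mapWord g x) = rot p (ZMod p) ((mapWord s ∘ₗ sd) x) := by
      intro x hx
      refine eq_of_mem_supported (mapWord s ∘ₗ sd ∘ₗ mapWord g)
        (rot p (ZMod p) ∘ₗ mapWord s ∘ₗ sd) ?_ hx
      rintro l ⟨h1, h2⟩
      simp only [LinearMap.comp_apply, sd_mapWord]
      refine eq_of_mem_supported (mapWord s ∘ₗ mapWord (List.map g))
        (rot p (ZMod p) ∘ₗ mapWord s) ?_ (sd_single_mem_supported l)
      rintro w ⟨-, hw, -⟩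
      simp only [LinearMap.comp_apply, mapWord_single, rot, List.map_map]
      congr 1
      refine List.map_congr_left fun a ha => ?_
      have hal := (hw a ha).1.subset
      exact hs a (hw a ha).2 (fun x hx => h1 x (hal hx))
        fun x hx y hy => h2 x (hal hx) y (hal hy)
    have hzS : (sdGeom ^ m) (joinChain (ZMod p) p g v k) ∈ S :=
      supported_weaken (fun l hl => hfine hl (List.Sublist.refl l)) (hz k hk.le m)
    have hsd : ∀ x, bd ((sdGeom ^ m : Module.End (ZMod p) (List V →₀ ZMod p)) x) =
        (sdGeom ^ m : Module.End (ZMod p) (List V →₀ ZMod p)) (bd x) :=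
      map_pow_apply bd_sdGeom m
    have hsg : ∀ x, (sdGeom ^ m : Module.End (ZMod p) (List V →₀ ZMod p)) (mapWord g x) =
        mapWord g ((sdGeom ^ m : Module.End (ZMod p) (List V →₀ ZMod p)) x) := fun x =>
      (map_pow_apply (f := mapWord g) (fun x => (sdGeom_mapWord g x).symm) m x).symm
    simp only [hc]
    rw [bd_mapWord, bd_sd, hsd, bd_joinChain hg, map_cyc hsg]
    exact map_cyc_of_mem hST hsT p (k + 1) hzS
  · have h1 := hz N le_rfl m
    refine mapWord_mem_supported (P := fun w => (w.map s).IsChain (· ≠ ·) → False) s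
      (fun w hw => hw) ?_
    refine map_mem_supported sd ?_ h1
    intro l hl
    refine supported_weaken ?_ (sd_single_mem_supported l)
    rintro w ⟨hw1, hw2, hw3⟩
    exact hcon w (hw1.trans hl.1) (fun l' hl' => ⟨(hw2 l' hl').2, hfine hl (hw2 l' hl').1⟩) hw3

end Geometry

/-- An equivariant choice of origin in the free orbits of an action of `ZMod p`. -/
lemma exists_equivariant_section (p : ℕ) (α : Type*) [AddAction (ZMod p) α] :
    ∃ σ : α → ZMod p, ∀ a, (∀ t : ZMod p, t +ᵥ a = a → t = 0) →
      σ ((1 : ZMod p) +ᵥ a) = σ a + 1 := by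
  let rep : α → α := fun a => (Quotient.mk (AddAction.orbitRel (ZMod p) α) a).out
  have hrep : ∀ a, ∃ t : ZMod p, t +ᵥ rep a = a := by
    intro a
    have : (AddAction.orbitRel (ZMod p) α).r a (rep a) :=
      Setoid.symm' _ (Quotient.mk_out (s := AddAction.orbitRel (ZMod p) α) a)
    exact this
  choose σ hσ using hrep
  refine ⟨σ, fun a ha => ?_⟩
  have h1 : rep ((1 : ZMod p) +ᵥ a) = rep a := by
    refine congrArg Quotient.out ?_
    exact Quotient.sound (s := AddAction.orbitRel (ZMod p) α) ⟨1, rfl⟩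
  have h2 := hσ ((1 : ZMod p) +ᵥ a)
  rw [h1] at h2
  have h3 : (σ ((1 : ZMod p) +ᵥ a) - σ a - 1) +ᵥ a = a := by
    have h : (σ ((1 : ZMod p) +ᵥ a) - σ a - 1) +ᵥ (σ a +ᵥ rep a) = a := by
      rw [vadd_vadd,
        show σ ((1 : ZMod p) +ᵥ a) - σ a - 1 + σ a = -1 + σ ((1 : ZMod p) +ᵥ a) by ring,
        ← vadd_vadd, h2, vadd_vadd]
      simp
    rwa [hσ a] at h
  have h4 := ha _ h3
  linear_combination h4

section

variable {V : Type*} [NormedAddCommGroup V] [NormedSpace ℝ V]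

/-- There is no equivariant labelling of small sets of points of a join of `N + 1` orbits by
elements of a free `ZMod p`-set which is controlled by a rank with values in `{1, …, N}`. -/
theorem not_exists_ranked_label {p : ℕ} [Fact p.Prime] (g : V →ₗ[ℝ] V) (hg : g^[p] = id)
    (v : ℕ → V) (N : ℕ) (K : Set V)
    (hK : ∀ a : ℕ → ℕ, ∃ S ⊆ K, Convex ℝ S ∧ ∀ j ≤ N, g^[a j] (v j) ∈ S)
    (hgK : ∀ x ∈ K, g x ∈ K) (hgd : ∀ x y, dist (g x) (g y) = dist x y)
    {B : ℝ} (hB : ∀ x ∈ K, ∀ y ∈ K, dist x y ≤ B) {δ : ℝ} (hδ : 0 < δ)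
    {α : Type*} [AddAction (ZMod p) α] (q : List V → α) (rk : List V → ℕ)
    (hfree : ∀ l : List V, l ≠ [] → (∀ x ∈ l, x ∈ K) → (∀ x ∈ l, ∀ y ∈ l, dist x y < δ) →
      ∀ t : ZMod p, t +ᵥ q l = q l → t = 0)
    (hq : ∀ l : List V, q (l.map g) = (1 : ZMod p) +ᵥ q l)
    (hrk : ∀ l : List V, l ≠ [] → (∀ x ∈ l, x ∈ K) → (∀ x ∈ l, ∀ y ∈ l, dist x y < δ) →
      rk l ∈ Finset.Icc 1 N)
    (hmono : ∀ l' l : List V, l'.Sublist l → q l' ≠ q l → rk l' < rk l) : False := by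
  obtain ⟨σ, hσ⟩ := exists_equivariant_section p α
  obtain ⟨w, hwN, hw, hsub, hchain⟩ := exists_flag_isChain_ne g hg v N K hK hgK hgd hB hδ
    (fun l => σ (q l)) (fun l h1 h2 h3 => by rw [hq, hσ _ (hfree l h1 h2 h3)])
  have hdec : (w.map rk).IsChain (· > ·) := by
    rw [List.isChain_map] at hchain ⊢
    have hsub' := hsub.isChain
    rw [List.isChain_iff_getElem] at hchain hsub' ⊢
    exact fun i hi => hmono _ _ (hsub' i hi) fun h => hchain i hi (by rw [h])
  have hnd : (w.map rk).Nodup := hdec.pairwise.imp fun h => ne_of_gt h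
  have hsubset : (w.map rk).toFinset ⊆ Finset.Icc 1 N := by
    intro n hn
    obtain ⟨l, hl, rfl⟩ := List.mem_map.1 (List.mem_toFinset.1 hn)
    exact hrk l (hw l hl).1 (hw l hl).2.1 (hw l hl).2.2
  have := Finset.card_le_card hsubset
  rw [List.toFinset_card_of_nodup hnd, List.length_map, hwN, Nat.card_Icc] at this
  omega

end

lemma eq_univ_of_add_mem {p : ℕ} [Fact p.Prime] {t : ZMod p} (ht : t ≠ 0) {S : Set (ZMod p)}
    (hS : ∀ k ∈ S, k + t ∈ S) {a : ZMod p} (ha : a ∈ S) (b : ZMod p) : b ∈ S := by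
  have h : ∀ n : ℕ, a + n * t ∈ S := by
    intro n
    induction n with
    | zero => simpa
    | succ n ih => convert hS _ ih using 1; push_cast; ring
  convert h ((b - a) / t).val using 1
  rw [ZMod.natCast_zmod_val]
  field_simp
  ring

section

variable {W : Type*} [Finite W] {G H : SimpleGraph W}

lemma card_connectedComponent_le (h : G ≤ H) :
    Nat.card H.ConnectedComponent ≤ Nat.card G.ConnectedComponent :=
  Nat.card_le_card_of_surjective _ (SimpleGraph.ConnectedComponent.surjective_map_ofLE h)

lemma reachable_of_card_connectedComponent_le (h : G ≤ H)
    (hc : Nat.card G.ConnectedComponent ≤ Nat.card H.ConnectedComponent) {i j : W}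
    (hij : H.Reachable i j) : G.Reachable i j := by
  have hs := SimpleGraph.ConnectedComponent.surjective_map_ofLE h
  have hb := (Nat.bijective_iff_surjective_and_card _).2
    ⟨hs, le_antisymm hc (card_connectedComponent_le h)⟩
  refine SimpleGraph.ConnectedComponent.exact (hb.1 ?_)
  simpa using hij

lemma card_connectedComponent_lt {i j : W} (hij : i ≠ j) (h : G.Reachable i j) :
    Nat.card G.ConnectedComponent < Nat.card W := by
  have hs : Function.Surjective G.connectedComponentMk := Quot.mk_surjective
  refine lt_of_le_of_ne (Nat.card_le_card_of_surjective _ hs) fun hc => hij ?_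
  exact ((Nat.bijective_iff_surjective_and_card _).2 ⟨hs, hc.symm⟩).1
    (SimpleGraph.ConnectedComponent.sound h)

lemma two_le_card_connectedComponent {i j : W} (h : ¬ G.Reachable i j) :
    2 ≤ Nat.card G.ConnectedComponent := by
  have : Nontrivial G.ConnectedComponent :=
    ⟨G.connectedComponentMk i, G.connectedComponentMk j,
      fun he => h (SimpleGraph.ConnectedComponent.exact he)⟩
  exact Finite.one_lt_card

/-- Points joined by a path of short edges are close to each other. -/
lemma dist_le_of_reachable {E : Type*} [PseudoMetricSpace E] {x : W → E} {c : ℝ} (hc : 0 ≤ c)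
    (hG : ∀ i j, G.Adj i j → dist (x i) (x j) ≤ c) {i j : W} (h : G.Reachable i j) :
    dist (x i) (x j) ≤ Nat.card W * c := by
  classical
  have := Fintype.ofFinite W
  have key : ∀ {i j : W} (q : G.Walk i j), dist (x i) (x j) ≤ q.length * c := by
    intro i j q
    induction q with
    | nil => simp
    | @cons u v w h q ih =>
      refine (dist_triangle _ (x v) _).trans ?_
      have := hG _ _ h
      rw [SimpleGraph.Walk.length_cons]
      push_cast
      linarith
  obtain ⟨q⟩ := h
  refine (key q.toPath.1).trans (mul_le_mul_of_nonneg_right ?_ hc)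
  rw [Nat.card_eq_fintype_card]
  exact_mod_cast q.toPath.2.length_lt.le

end

/-- The pairs of indices such that the two points get close in some tuple of the list. -/
def nearGraph {W E : Type*} [PseudoMetricSpace E] (ε : ℝ) (l : List (W → E)) : SimpleGraph W :=
  SimpleGraph.fromRel fun i j => ∃ x ∈ l, dist (x i) (x j) < ε

lemma nearGraph_adj {W E : Type*} [PseudoMetricSpace E] {ε : ℝ} {l : List (W → E)} {i j : W} :
    (nearGraph ε l).Adj i j ↔ i ≠ j ∧ ∃ x ∈ l, dist (x i) (x j) < ε := by
  simp [nearGraph, SimpleGraph.fromRel_adj, dist_comm]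

lemma nearGraph_mono {W E : Type*} [PseudoMetricSpace E] {ε : ℝ} {l l' : List (W → E)}
    (h : l' ⊆ l) : nearGraph ε l' ≤ nearGraph ε l := fun i j => by
  rw [nearGraph_adj, nearGraph_adj]
  exact fun ⟨h1, x, hx, h2⟩ => ⟨h1, x, h hx, h2⟩

/-- The indices at which the `i`-th test function is large on some tuple of the list. -/
def largeSet {X W ι : Type*} (Φ : X → ι → W → ℝ) (ε : ℝ) (l : List X) (i : ι) : Set W :=
  {k | ∃ x ∈ l, ε ≤ Φ x i k}

lemma largeSet_mono {X W ι : Type*} {Φ : X → ι → W → ℝ} {ε : ℝ} {l l' : List X} (h : l' ⊆ l)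
    (i : ι) : largeSet Φ ε l' i ⊆ largeSet Φ ε l i :=
  fun _ ⟨x, hx, h2⟩ => ⟨x, h hx, h2⟩

/-- The label of a list of tuples. -/
def label {W ι E : Type*} [PseudoMetricSpace E] (Φ : (W → E) → ι → W → ℝ) (ε ε' : ℝ)
    (l : List (W → E)) : (ι → Set W) × Set (W × W) :=
  (largeSet Φ ε' l, {e | (nearGraph ε l).Reachable e.1 e.2})

/-- The rank of the label of a list of tuples. -/
noncomputable def labelRank {W ι E : Type*} [Fintype ι] [PseudoMetricSpace E]
    (Φ : (W → E) → ι → W → ℝ) (ε ε' : ℝ) (l : List (W → E)) : ℕ :=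
  ∑ i, (largeSet Φ ε' l i).ncard + (Nat.card W - Nat.card (nearGraph ε l).ConnectedComponent)

lemma labelRank_lt {W ι E : Type*} [Finite W] [Fintype ι] [PseudoMetricSpace E]
    {Φ : (W → E) → ι → W → ℝ} {ε ε' : ℝ} {l l' : List (W → E)} (h : l' ⊆ l)
    (hne : label Φ ε ε' l' ≠ label Φ ε ε' l) :
    labelRank Φ ε ε' l' < labelRank Φ ε ε' l := by
  contrapose! hne
  have h1 : ∀ i ∈ Finset.univ, (largeSet Φ ε' l' i).ncard ≤ (largeSet Φ ε' l i).ncard :=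
    fun i _ => Set.ncard_le_ncard (largeSet_mono h i)
  have h2 := Finset.sum_le_sum h1
  have h3 := card_connectedComponent_le (nearGraph_mono (ε := ε) h)
  have h4 : Nat.card (nearGraph ε l').ConnectedComponent ≤ Nat.card W :=
    Nat.card_le_card_of_surjective _ Quot.mk_surjective
  unfold labelRank at hne
  have h5 := (Finset.sum_eq_sum_iff_of_le h1).1 (by omega)
  refine Prod.ext (funext fun i => ?_) (Set.ext fun e => ⟨?_, ?_⟩)
  · exact Set.eq_of_subset_of_ncard_le (largeSet_mono h i) (h5 i (Finset.mem_univ i)).ge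
  · exact fun he => SimpleGraph.Reachable.mono (nearGraph_mono h) he
  · exact reachable_of_card_connectedComponent_le (nearGraph_mono h) (by omega)

lemma labelRank_mem_Icc {p r N : ℕ} [Fact p.Prime] {E : Type*} [PseudoMetricSpace E]
    {Φ : (ZMod p → E) → Fin r → ZMod p → ℝ} {ε ε' : ℝ} {l : List (ZMod p → E)}
    (hN : r * (p - 1) + (p - 2) ≤ N) (hA : ∀ i, ∃ k, k ∉ largeSet Φ ε' l i)
    (hG : ∃ i j, ¬ (nearGraph ε l).Reachable i j)
    (hl : (∃ i, (largeSet Φ ε' l i).Nonempty) ∨ ∃ i j, i ≠ j ∧ (nearGraph ε l).Reachable i j) :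
    labelRank Φ ε ε' l ∈ Finset.Icc 1 N := by
  have hcard : Nat.card (ZMod p) = p := by simp
  unfold labelRank
  rw [hcard, Finset.mem_Icc]
  constructor
  · obtain ⟨i, hi⟩ | ⟨i, j, hij, h⟩ := hl
    · have h1 := (Set.ncard_pos).2 hi
      have h2 := Finset.single_le_sum (f := fun i => (largeSet Φ ε' l i).ncard)
        (fun _ _ => Nat.zero_le _) (Finset.mem_univ i)
      omega
    · have := card_connectedComponent_lt hij h
      rw [hcard] at this
      omega
  · obtain ⟨i, j, h⟩ := hG
    have h1 := two_le_card_connectedComponent h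
    have h2 : ∑ i, (largeSet Φ ε' l i).ncard ≤ ∑ _i : Fin r, (p - 1) := by
      refine Finset.sum_le_sum fun i _ => Nat.le_sub_one_of_lt ?_
      obtain ⟨k, hk⟩ := hA i
      have hss : largeSet Φ ε' l i ⊂ Set.univ :=
        Set.ssubset_univ_iff.2 fun h => hk (h.symm ▸ Set.mem_univ k)
      have := Set.ncard_lt_ncard hss
      rwa [Set.ncard_univ, hcard] at this
    rw [Finset.sum_const, Finset.card_univ, Fintype.card_fin, smul_eq_mul] at h2
    omega

section

open Pointwise

variable {p : ℕ} {E ι : Type*} [PseudoMetricSpace E]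
  {Φ : (ZMod p → E) → ι → ZMod p → ℝ} {ε ε' : ℝ}

lemma label_map_shift {g : (ZMod p → E) → ZMod p → E} (hg : ∀ x k, g x k = x (k - 1))
    (hΦ : ∀ x i k, Φ (g x) i k = Φ x i (k - 1)) (l : List (ZMod p → E)) :
    label Φ ε ε' (l.map g) = (1 : ZMod p) +ᵥ label Φ ε ε' l := by
  refine Prod.ext (funext fun i => Set.ext fun k => ?_) (Set.ext fun e => ?_)
  · simp [label, largeSet, Set.mem_vadd_set_iff_neg_vadd_mem, hΦ, sub_eq_neg_add]
  · let φ : nearGraph ε (l.map g) ≃g nearGraph ε l :=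
      { toEquiv := Equiv.subRight 1
        map_rel_iff' := by simp [nearGraph_adj, hg] }
    have := φ.reachable_iff (u := e.1) (v := e.2)
    simp only [label, Prod.vadd_snd, Set.mem_vadd_set_iff_neg_vadd_mem, Set.mem_ofPred_eq,
      Prod.vadd_fst, vadd_eq_add]
    rw [← this]
    simp [φ, sub_eq_neg_add]

lemma label_free [Fact p.Prime] {l : List (ZMod p → E)} (hA : ∀ i, ∃ k, k ∉ largeSet Φ ε' l i)
    (hG : ∃ i j, ¬ (nearGraph ε l).Reachable i j)
    (hl : (∃ i, (largeSet Φ ε' l i).Nonempty) ∨ ∃ i j, i ≠ j ∧ (nearGraph ε l).Reachable i j)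
    {t : ZMod p} (ht : t +ᵥ label Φ ε ε' l = label Φ ε ε' l) : t = 0 := by
  by_contra ht0
  obtain ⟨i, a, ha⟩ | ⟨i, j, hij, h⟩ := hl
  · obtain ⟨b, hb⟩ := hA i
    have h1 : t +ᵥ largeSet Φ ε' l i = largeSet Φ ε' l i := congrFun (congrArg Prod.fst ht) i
    refine hb (eq_univ_of_add_mem ht0 (fun k hk => ?_) ha b)
    rw [← h1, add_comm]
    exact Set.vadd_mem_vadd_set hk
  · obtain ⟨a, b, hab⟩ := hG
    have h1 := congrArg Prod.snd ht
    have h2 : ∀ k, (nearGraph ε l).Reachable k (k + (j - i)) := by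
      refine eq_univ_of_add_mem (S := {k | (nearGraph ε l).Reachable k (k + (j - i))}) ht0
        (fun k hk => ?_) (a := i) (by simpa using h)
      have h3 : (t + k, t + (k + (j - i))) ∈ (label Φ ε ε' l).2 := by
        rw [← h1]
        have h4 : (k, k + (j - i)) ∈ (label Φ ε ε' l).2 := hk
        exact Set.vadd_mem_vadd_set h4
      have h4 : (nearGraph ε l).Reachable (t + k) (t + (k + (j - i))) := h3
      rwa [Set.mem_ofPred_eq, add_comm k t, add_assoc]
    exact hab (eq_univ_of_add_mem (S := {k | (nearGraph ε l).Reachable a k})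
      (sub_ne_zero.2 hij.symm) (fun k hk => SimpleGraph.Reachable.trans hk (h2 k))
      (SimpleGraph.Reachable.refl a) b)

end

/-- The cyclic shift of a tuple of points. -/
def shift (p : ℕ) (E : Type*) [AddCommGroup E] [Module ℝ E] : (ZMod p → E) →ₗ[ℝ] (ZMod p → E) :=
  LinearMap.funLeft ℝ E (· - 1)

section

variable {p : ℕ} {E : Type*}

lemma shift_apply [AddCommGroup E] [Module ℝ E] (x : ZMod p → E) (k : ZMod p) :
    shift p E x k = x (k - 1) := rfl

lemma shift_iterate_apply [AddCommGroup E] [Module ℝ E] (n : ℕ) (x : ZMod p → E) (k : ZMod p) :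
    (shift p E)^[n] x k = x (k - n) := by
  induction n generalizing x with
  | zero => simp
  | succ n ih =>
    rw [Function.iterate_succ_apply, ih, shift_apply]
    congr 1
    push_cast
    ring

lemma shift_iterate_self [AddCommGroup E] [Module ℝ E] : (shift p E)^[p] = id := by
  ext x k
  rw [shift_iterate_apply]
  simp

lemma dist_shift [NormedAddCommGroup E] [NormedSpace ℝ E] [NeZero p] (x y : ZMod p → E) :
    dist (shift p E x) (shift p E y) = dist x y := by
  refine le_antisymm ((dist_pi_le_iff dist_nonneg).2 fun k => dist_le_pi_dist x y (k - 1))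
    ((dist_pi_le_iff dist_nonneg).2 fun k => ?_)
  simpa [shift_apply] using dist_le_pi_dist (shift p E x) (shift p E y) (k + 1)

end

section

variable {p d : ℕ} [Fact p.Prime]

/-- The iterated join of the boundaries of `d` simplices with `p` vertices. -/
def joinSet (p d : ℕ) [Fact p.Prime] : Set (ZMod p → EuclideanSpace ℝ (Fin d)) :=
  {x | (∀ k j, 0 ≤ x k j) ∧ ∑ k, ∑ j, x k j = 1 ∧ ∀ j, ∃ k, x k j = 0}

/-- A face of the join, given by its missing vertices. -/
def joinFace (κ : Fin d → ZMod p) : Set (ZMod p → EuclideanSpace ℝ (Fin d)) :=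
  {x | (∀ k j, 0 ≤ x k j) ∧ ∑ k, ∑ j, x k j = 1 ∧ ∀ j, x (κ j) j = 0}

lemma joinFace_subset (κ : Fin d → ZMod p) : joinFace κ ⊆ joinSet p d :=
  fun _ hx => ⟨hx.1, hx.2.1, fun j => ⟨κ j, hx.2.2 j⟩⟩

lemma convex_joinFace (κ : Fin d → ZMod p) : Convex ℝ (joinFace κ) := by
  intro x hx y hy a b ha hb hab
  refine ⟨fun k j => ?_, ?_, fun j => ?_⟩
  · have := hx.1 k j
    have := hy.1 k j
    simp only [Pi.add_apply, Pi.smul_apply, PiLp.add_apply, PiLp.smul_apply, smul_eq_mul]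
    positivity
  · simp only [Pi.add_apply, Pi.smul_apply, PiLp.add_apply, PiLp.smul_apply, smul_eq_mul,
      Finset.sum_add_distrib, ← Finset.mul_sum, hx.2.1, hy.2.1]
    linarith
  · simp [hx.2.2 j, hy.2.2 j]

lemma shift_mem_joinSet {x : ZMod p → EuclideanSpace ℝ (Fin d)} (hx : x ∈ joinSet p d) :
    shift p _ x ∈ joinSet p d := by
  refine ⟨fun k j => hx.1 _ _, ?_, fun j => ?_⟩
  · rw [← hx.2.1]
    exact (Equiv.subRight (1 : ZMod p)).sum_comp fun k => ∑ j, x k j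
  · obtain ⟨k, hk⟩ := hx.2.2 j
    exact ⟨k + 1, by simpa [shift_apply] using hk⟩

/-- The base vertices of the orbits of vertices of the join. -/
noncomputable def joinVertex (p d : ℕ) (m : ℕ) (k : ZMod p) : EuclideanSpace ℝ (Fin d) :=
  open Classical in WithLp.toLp 2 fun j => if k = 0 ∧ m / (p - 1) = j then 1 else 0

lemma exists_joinFace (hd : 0 < d) (a : ℕ → ℕ) : ∃ S ⊆ joinSet p d, Convex ℝ S ∧
    ∀ m ≤ d * (p - 1) - 1, (shift p _)^[a m] (joinVertex p d m) ∈ S := by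
  classical
  have hp := (Fact.out : p.Prime).two_le
  have hp1 : 0 < p - 1 := by omega
  have hκ : ∀ j : Fin d, ∃ k : ZMod p, ∀ i < p - 1, (a (j * (p - 1) + i) : ZMod p) ≠ k := by
    intro j
    have hlt : ((Finset.range (p - 1)).image fun i => (a (j * (p - 1) + i) : ZMod p)).card <
        Fintype.card (ZMod p) := by
      refine Finset.card_image_le.trans_lt ?_
      rw [Finset.card_range, ZMod.card]
      omega
    obtain ⟨k, hk⟩ := Finset.exists_mem_notMem_of_card_lt_card (t := Finset.univ) hlt
    exact ⟨k, fun i hi h => hk.2 (Finset.mem_image.2 ⟨i, Finset.mem_range.2 hi, h⟩)⟩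
  choose κ hκ using hκ
  refine ⟨joinFace κ, joinFace_subset κ, convex_joinFace κ, fun m hm => ?_⟩
  have hmd : m / (p - 1) < d := by
    rw [Nat.div_lt_iff_lt_mul hp1]
    have := Nat.mul_pos hd hp1
    omega
  have key : ∀ k j, (shift p (EuclideanSpace ℝ (Fin d)))^[a m] (joinVertex p d m) k j =
      if k = a m ∧ (⟨m / (p - 1), hmd⟩ : Fin d) = j then 1 else 0 := by
    intro k j
    rw [shift_iterate_apply]
    simp [joinVertex, sub_eq_zero, Fin.ext_iff]
  refine ⟨fun k j => ?_, ?_, fun j => ?_⟩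
  · rw [key]
    split_ifs <;> norm_num
  · simp only [key, ite_and]
    simp
  · rw [key, if_neg]
    rintro ⟨h1, rfl⟩
    refine hκ ⟨m / (p - 1), hmd⟩ (m % (p - 1)) (Nat.mod_lt _ hp1) ?_
    rw [h1, Nat.div_add_mod']

lemma isCompact_joinSet : IsCompact (joinSet p d) := by
  refine Metric.isCompact_of_isClosed_isBounded ?_
    (Metric.isBounded_closedBall (x := 0) (r := 1) |>.subset fun x hx => ?_)
  · have h1 : IsClosed {x : ZMod p → EuclideanSpace ℝ (Fin d) | ∀ k j, 0 ≤ x k j} := by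
      simp only [Set.ofPred_forall]
      exact isClosed_iInter fun k => isClosed_iInter fun j =>
        isClosed_le continuous_const (by fun_prop)
    have h2 : IsClosed {x : ZMod p → EuclideanSpace ℝ (Fin d) | ∑ k, ∑ j, x k j = 1} :=
      isClosed_eq (by fun_prop) continuous_const
    have h3 : IsClosed {x : ZMod p → EuclideanSpace ℝ (Fin d) | ∀ j, ∃ k, x k j = 0} := by
      simp only [Set.ofPred_forall, Set.ofPred_exists]
      exact isClosed_iInter fun j => isClosed_iUnion_of_finite fun k =>
        isClosed_eq (by fun_prop) continuous_const
    exact h1.inter (h2.inter h3)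
  · rw [mem_closedBall_zero_iff, pi_norm_le_iff_of_nonneg zero_le_one]
    intro k
    have h0 : ∑ j, x k j ≤ 1 := by
      rw [← hx.2.1]
      exact Finset.single_le_sum (f := fun k => ∑ j, x k j)
        (fun k _ => Finset.sum_nonneg fun j _ => hx.1 k j) (Finset.mem_univ k)
    rw [EuclideanSpace.norm_eq, Real.sqrt_le_one]
    refine le_trans (Finset.sum_le_sum fun j _ => ?_) h0
    have h1 := (Finset.single_le_sum (fun j _ => hx.1 k j) (Finset.mem_univ j)).trans h0
    rw [Real.norm_eq_abs, sq_abs]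
    nlinarith [hx.1 k j]

lemma exists_ne_of_mem_joinSet {x : ZMod p → EuclideanSpace ℝ (Fin d)} (hx : x ∈ joinSet p d) :
    ∃ k, x k ≠ x 0 := by
  by_contra! h
  have : ∀ k j, x k j = 0 := fun k j => by
    obtain ⟨k', hk'⟩ := hx.2.2 j
    rw [h k, ← h k', hk']
  simpa [this] using hx.2.1

/-- Points of the join stay away from the diagonal. -/
lemma exists_le_dist_joinSet : ∃ η > 0, ∀ x ∈ joinSet p d, ∃ k, η ≤ dist (x k) (x 0) := by
  obtain ⟨η, hη, h⟩ := (isCompact_joinSet (p := p) (d := d)).exists_forall_le'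
    (f := fun x => ∑ k, dist (x k) (x 0)) (by fun_prop) (a := 0) fun x hx => by
      obtain ⟨k, hk⟩ := exists_ne_of_mem_joinSet hx
      exact (dist_pos.2 hk).trans_le
        (Finset.single_le_sum (f := fun k => dist (x k) (x 0)) (fun _ _ => dist_nonneg)
          (Finset.mem_univ k))
  have hp : (0 : ℝ) < p := by exact_mod_cast (Fact.out : p.Prime).pos
  refine ⟨η / p, by positivity, fun x hx => ?_⟩
  by_contra! hlt
  have := Finset.sum_lt_sum_of_nonempty Finset.univ_nonempty fun k _ => hlt k
  rw [Finset.sum_const, Finset.card_univ, ZMod.card, nsmul_eq_mul, mul_div_cancel₀ _ hp.ne'] at this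
  exact absurd (h x hx) (not_le.2 this)

end

section

variable {p d r : ℕ} [Fact p.Prime]

lemma exists_le_test (Φ : (ZMod p → EuclideanSpace ℝ (Fin d)) → Fin r → ZMod p → ℝ)
    (hΦc : Continuous Φ) (hsum : ∀ x i, ∑ k, Φ x i k = 0)
    (hcon : ∀ x, Function.Injective x → ∃ i k, Φ x i k ≠ 0) {ε : ℝ} (hε : 0 < ε) :
    ∃ ε' > 0, ∀ x ∈ joinSet p d, (∀ i j, i ≠ j → ε ≤ dist (x i) (x j)) → ∃ i k, ε' ≤ Φ x i k := by
  have hcl : IsClosed {x : ZMod p → EuclideanSpace ℝ (Fin d) |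
      ∀ i j, i ≠ j → ε ≤ dist (x i) (x j)} := by
    simp only [Set.ofPred_forall]
    exact isClosed_iInter fun i => isClosed_iInter fun j => isClosed_iInter fun _ =>
      isClosed_le continuous_const (by fun_prop)
  have hc : ∀ i k, Continuous fun x => Φ x i k := fun i k => by fun_prop
  obtain ⟨β, hβ, h⟩ := (isCompact_joinSet.inter_right hcl).exists_forall_le'
    (f := fun x => ∑ i, ∑ k, max 0 (Φ x i k)) (by fun_prop) (a := 0) fun x hx => by
      have hinj : Function.Injective x := fun i j hij => by
        by_contra hne
        have := hx.2 i j hne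
        rw [hij, dist_self] at this
        linarith
      obtain ⟨i, k, hik⟩ := hcon x hinj
      obtain ⟨k', -, hk'⟩ := Finset.exists_pos_of_sum_zero_of_exists_nonzero _ (hsum x i)
        ⟨k, Finset.mem_univ k, hik⟩
      refine (hk'.trans_le (le_max_right 0 _)).trans_le ?_
      refine (Finset.single_le_sum (f := fun k => max 0 (Φ x i k)) (fun _ _ => le_max_left _ _)
        (Finset.mem_univ k')).trans ?_
      exact Finset.single_le_sum (f := fun i => ∑ k, max 0 (Φ x i k))
        (fun _ _ => Finset.sum_nonneg fun _ _ => le_max_left _ _) (Finset.mem_univ i)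
  refine ⟨β / (r * p + 1), by positivity, fun x hx hx' => ?_⟩
  by_contra! hlt
  have h1 : ∑ i, ∑ k, max 0 (Φ x i k) ≤ ∑ _i : Fin r, ∑ _k : ZMod p, β / (r * p + 1) :=
    Finset.sum_le_sum fun i _ => Finset.sum_le_sum fun k _ =>
      max_le (by positivity) (hlt i k).le
  have h2 := (h x ⟨hx, hx'⟩).trans h1
  simp only [Finset.sum_const, Finset.card_univ, ZMod.card, Fintype.card_fin, nsmul_eq_mul] at h2
  rw [← mul_assoc, mul_div_assoc', le_div_iff₀ (by positivity)] at h2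
  linarith

/-- Cyclically equivariant test functions on `p`-tuples of points of `ℝᵈ`, fewer than `d` of them,
vanish simultaneously at some tuple of distinct points. -/
theorem exists_injective_test_eq_zero (hrd : r < d)
    (Φ : (ZMod p → EuclideanSpace ℝ (Fin d)) → Fin r → ZMod p → ℝ)
    (hΦc : Continuous Φ) (hsum : ∀ x i, ∑ k, Φ x i k = 0)
    (hΦ : ∀ x i k, Φ (shift p _ x) i k = Φ x i (k - 1)) :
    ∃ x, Function.Injective x ∧ ∀ i k, Φ x i k = 0 := by
  by_contra! hcon
  have hp2 := (Fact.out : p.Prime).two_le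
  have hp : (0 : ℝ) < p := by exact_mod_cast (Fact.out : p.Prime).pos
  obtain ⟨η, hη, hfar⟩ := exists_le_dist_joinSet (p := p) (d := d)
  obtain ⟨ε, hε, hεη⟩ : ∃ ε > 0, (p : ℝ) * (3 * ε) < η :=
    ⟨η / (4 * p), by positivity, by field_simp; linarith⟩
  obtain ⟨ε', hε', hlarge⟩ := exists_le_test Φ hΦc hsum hcon hε
  obtain ⟨δ₀, hδ₀, hunif⟩ := Metric.uniformContinuousOn_iff.1
    (isCompact_joinSet.uniformContinuousOn_of_continuous hΦc.continuousOn) ε' hε'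
  obtain ⟨B, hB⟩ := Metric.isBounded_iff.1 (isCompact_joinSet (p := p) (d := d)).isBounded
  have hδ : 0 < min δ₀ ε := lt_min hδ₀ hε
  have hN : r * (p - 1) + (p - 2) ≤ d * (p - 1) - 1 := by
    have := Nat.mul_le_mul_right (p - 1) (Nat.succ_le_of_lt hrd)
    rw [Nat.succ_mul] at this
    omega
  have hgood : ∀ l : List (ZMod p → EuclideanSpace ℝ (Fin d)), l ≠ [] →
      (∀ x ∈ l, x ∈ joinSet p d) → (∀ x ∈ l, ∀ y ∈ l, dist x y < min δ₀ ε) →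
      (∀ i, ∃ k, k ∉ largeSet Φ ε' l i) ∧ (∃ i j, ¬ (nearGraph ε l).Reachable i j) ∧
      ((∃ i, (largeSet Φ ε' l i).Nonempty) ∨
        ∃ i j, i ≠ j ∧ (nearGraph ε l).Reachable i j) := by
    intro l hl hlK hlδ
    obtain ⟨x₀, hx₀⟩ := List.exists_mem_of_ne_nil l hl
    refine ⟨fun i => ?_, ?_, ?_⟩
    · by_contra! hall
      have hpos : ∀ k, 0 < Φ x₀ i k := by
        intro k
        obtain ⟨x, hx, hxk⟩ := hall k
        have h1 := hunif x (hlK x hx) x₀ (hlK _ hx₀)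
          ((hlδ x hx x₀ hx₀).trans_le (min_le_left _ _))
        have h2 := ((dist_le_pi_dist (Φ x i) (Φ x₀ i) k).trans
          (dist_le_pi_dist (Φ x) (Φ x₀) i)).trans_lt h1
        rw [Real.dist_eq, abs_lt] at h2
        linarith
      exact (Finset.sum_pos (fun k _ => hpos k) Finset.univ_nonempty).ne' (hsum x₀ i)
    · obtain ⟨k, hk⟩ := hfar x₀ (hlK _ hx₀)
      refine ⟨k, 0, fun hreach => ?_⟩
      have := dist_le_of_reachable (x := x₀) (c := 3 * ε) (by positivity) (fun i j hij => ?_) hreach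
      · rw [Nat.card_zmod] at this
        linarith
      · obtain ⟨-, x, hx, hxij⟩ := nearGraph_adj.1 hij
        have h1 := (hlδ x₀ hx₀ x hx).trans_le (min_le_right _ _)
        have h2 := dist_le_pi_dist x₀ x i
        have h3 := dist_le_pi_dist x₀ x j
        rw [dist_comm (x₀ j)] at h3
        linarith [dist_triangle4 (x₀ i) (x i) (x j) (x₀ j)]
    · by_cases hsep : ∀ i j, i ≠ j → ε ≤ dist (x₀ i) (x₀ j)
      · obtain ⟨i, k, hik⟩ := hlarge x₀ (hlK _ hx₀) hsep
        exact Or.inl ⟨i, k, x₀, hx₀, hik⟩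
      · push Not at hsep
        obtain ⟨i, j, hij, hlt⟩ := hsep
        exact Or.inr ⟨i, j, hij,
          SimpleGraph.Adj.reachable (nearGraph_adj.2 ⟨hij, x₀, hx₀, hlt⟩)⟩
  open Pointwise in
  exact not_exists_ranked_label (shift p (EuclideanSpace ℝ (Fin d))) shift_iterate_self
    (joinVertex p d) (d * (p - 1) - 1) (joinSet p d) (exists_joinFace (by omega))
    (fun x hx => shift_mem_joinSet hx) dist_shift (fun x hx y hy => hB hx hy) hδ
    (label Φ ε ε') (labelRank Φ ε ε')
    (fun l h1 h2 h3 t ht =>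
      label_free (hgood l h1 h2 h3).1 (hgood l h1 h2 h3).2.1 (hgood l h1 h2 h3).2.2 ht)
    (fun l => label_map_shift shift_apply hΦ l)
    (fun l h1 h2 h3 => labelRank_mem_Icc hN (hgood l h1 h2 h3).1 (hgood l h1 h2 h3).2.1
      (hgood l h1 h2 h3).2.2)
    (fun l' l h hne => labelRank_lt h.subset hne)

end

end WordChain

namespace IsMetricEquivToStd

variable {E : Type*} [TopologicalSpace E] {ρ : E → E → ℝ}

lemma nonneg (h : IsMetricEquivToStd ρ) (x y : E) : 0 ≤ ρ x y := by
  have h1 := h.2.2.1 x y x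
  rw [(h.2.1 x x).2 rfl, h.1 y x] at h1
  linarith

lemma continuous_s3 (h : IsMetricEquivToStd ρ) : Continuous fun e : E × E => ρ e.1 e.2 := by
  have hball : ∀ x : E, ∀ ε > 0, ∀ᶠ y in nhds x, ρ x y < ε := by
    intro x ε hε
    have hopen : IsOpen {y | ρ x y < ε} := by
      refine (h.2.2.2 _).2 fun y hy => ⟨ε - ρ x y, sub_pos.2 hy, fun z hz => ?_⟩
      have hz' : ρ y z < ε - ρ x y := hz
      have := h.2.2.1 x y z
      show ρ x z < ε
      linarith
    exact hopen.mem_nhds (by simpa [(h.2.1 x x).2 rfl] using hε)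
  refine continuous_iff_continuousAt.2 fun ⟨x, y⟩ => Metric.tendsto_nhds.2 fun ε hε => ?_
  rw [nhds_prod_eq]
  filter_upwards [(hball x (ε / 2) (half_pos hε)).prod_mk (hball y (ε / 2) (half_pos hε))]
    with ⟨x', y'⟩ ⟨hx, hy⟩
  simp only at hx hy ⊢
  rw [Real.dist_eq, abs_lt]
  have h1 := h.2.2.1 x' x y'
  have h2 := h.2.2.1 x y y'
  have h3 := h.2.2.1 x x' y
  have h4 := h.2.2.1 x' y' y
  rw [h.1 x' x] at h1
  rw [h.1 y' y] at h4
  constructor <;> linarith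

end IsMetricEquivToStd

/-- Corollary: existence of an `r`-equilateral `p`-gon in `ℝᵈ` with respect to
`r` metrics equivalent to the Euclidean metric, provided `d > r`. -/
theorem exists_r_equilateral_pgon
    (p d r : ℕ) (hp : p.Prime) (hodd : Odd p) (hd : 0 < d) (hr : 0 < r) (hdr : d > r)
    (ρ : Fin r → EuclideanSpace ℝ (Fin d) → EuclideanSpace ℝ (Fin d) → ℝ)
    (hρ : ∀ i, IsMetricEquivToStd (ρ i)) :
    ∃ x : ZMod p → EuclideanSpace ℝ (Fin d),
      Function.Injective x ∧
      ∀ i : Fin r, ∃ c : ℝ, 0 < c ∧ ∀ k : ZMod p, ρ i (x k) (x (k + 1)) = c := by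
  have : Fact p.Prime := ⟨hp⟩
  have hc : ∀ i (k : ZMod p), Continuous
      fun x : ZMod p → EuclideanSpace ℝ (Fin d) => ρ i (x k) (x (k + 1)) := fun i k =>
    (hρ i).continuous_s3.comp₂ (continuous_apply k) (continuous_apply (k + 1))
  obtain ⟨x, hx, h⟩ := WordChain.exists_injective_test_eq_zero (p := p) hdr
    (fun x i k => p * ρ i (x k) (x (k + 1)) - ∑ j, ρ i (x j) (x (j + 1)))
    (continuous_pi fun i => continuous_pi fun k =>
      (continuous_const.mul (hc i k)).sub (continuous_finsetSum _ fun j _ => hc i j))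
    (fun x i => by simp [Finset.sum_sub_distrib, ← Finset.mul_sum])
    (fun x i k => by
      have := (Equiv.subRight (1 : ZMod p)).sum_comp fun j => ρ i (x j) (x (j + 1))
      simp only [Equiv.subRight_apply] at this
      simp only [WordChain.shift_apply]
      rw [← this]
      simp only [sub_add_cancel, add_sub_cancel_right])
  have hp0 : (p : ℝ) ≠ 0 := by exact_mod_cast hp.ne_zero
  refine ⟨x, hx, fun i => ⟨ρ i (x 0) (x (0 + 1)), ?_, fun k => ?_⟩⟩
  · refine lt_of_le_of_ne ((hρ i).nonneg _ _) fun h0 => ?_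
    have := hx (((hρ i).2.1 _ _).1 h0.symm)
    simp at this
  · exact mul_left_cancel₀ hp0 (by linarith [h i k, h i 0])
end
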